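/- Let u, v ∈ BV(X), and let E ⊆ X be a Borel set such that every x ∈ E is a point of density 1 of E and u(x) = v(x) for every x ∈ E. Then V(u − v, E) = 0, and consequently V(u,A) = V(v,A) for every A ⊆ E. -/

import Mathlib

open MeasureTheory Metric Filter Set Topology
open scoped NNReal ENNReal

noncomputable section

universe u

/-- The measure `μ` is doubling with constant `Cd`:
`0 < μ(B(x,2r)) ≤ Cd·μ(B(x,r)) < ∞` for every `x` and every `r > 0`. -/
def IsDoublingWith {X : Type u} [PseudoMetricSpace X] [MeasurableSpace X]
    (μ : Measure X) (Cd : ℝ≥0) : Prop :=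
  ∀ (x : X) (r : ℝ), 0 < r →
    0 < μ (ball x (2 * r)) ∧
      μ (ball x (2 * r)) ≤ (Cd : ℝ≥0∞) * μ (ball x r) ∧
      (Cd : ℝ≥0∞) * μ (ball x r) < ⊤

/-- `X` is a geodesic space: any two points are joined by a unit-speed geodesic. -/
def IsGeodesic (X : Type u) [PseudoMetricSpace X] : Prop :=
  ∀ x y : X, ∃ γ : ℝ → X,
    LipschitzOnWith 1 γ (Icc 0 (dist x y)) ∧ γ 0 = x ∧ γ (dist x y) = y

/-- `g` is an upper gradient of `u`: for every `L ≥ 0` and every `1`-Lipschitz curve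
`γ : [0,L] → X`, `|u(γ 0) − u(γ L)| ≤ ∫₀^L g(γ t) dt`. -/
def IsUpperGradientOf {X : Type u} [PseudoMetricSpace X] (g u : X → ℝ) : Prop :=
  ∀ L : ℝ, 0 ≤ L → ∀ γ : ℝ → X, LipschitzOnWith 1 γ (Icc 0 L) →
    |u (γ 0) - u (γ L)| ≤ ∫ t in (0:ℝ)..L, g (γ t)

/-- The lower pointwise Lipschitz constant
`lip u (x) = liminf_{r→0} r⁻¹ sup_{y ∈ B(x,r)} |u y − u x|`. -/
def lipConst {X : Type u} [PseudoMetricSpace X] (u : X → ℝ) (x : X) : ℝ≥0∞ :=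
  Filter.liminf
    (fun r : ℝ => ⨆ y ∈ ball x r, ENNReal.ofReal (|u y - u x| / r)) (𝓝[>] (0:ℝ))

/-- `u` is locally Lipschitz on `W`: Lipschitz on every closed bounded subset of `W`. -/
def LocallyLipschitzOnSet {X : Type u} [PseudoMetricSpace X] (u : X → ℝ) (W : Set X) : Prop :=
  ∀ K : Set X, IsClosed K → Bornology.IsBounded K → K ⊆ W →
    ∃ L : ℝ≥0, LipschitzOnWith L u K

/-- `u i → f` in `L¹_loc(W)`. -/
def TendstoL1loc {X : Type u} [PseudoMetricSpace X] [MeasurableSpace X]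
    (μ : Measure X) (u : ℕ → X → ℝ) (f : X → ℝ) (W : Set X) : Prop :=
  ∀ K : Set X, IsClosed K → Bornology.IsBounded K → K ⊆ W →
    Tendsto (fun i => ∫⁻ x in K, ENNReal.ofReal |u i x - f x| ∂μ) atTop (𝓝 0)

/-- Total variation `V(f,W)` of `f` on an open set `W`:
the infimum over sequences of locally Lipschitz functions converging to `f` in `L¹_loc(W)`
of the liminf of `∫_W lip u_i dμ`. -/
def totVarOn {X : Type u} [PseudoMetricSpace X] [MeasurableSpace X]
    (μ : Measure X) (f : X → ℝ) (W : Set X) : ℝ≥0∞ :=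
  ⨅ (us : ℕ → X → ℝ) (_ : ∀ i, LocallyLipschitzOnSet (us i) W)
    (_ : TendstoL1loc μ us f W),
    Filter.liminf (fun i => ∫⁻ x in W, lipConst (us i) x ∂μ) atTop

/-- Total variation `V(f,A)` of `f` on an arbitrary set `A`:
infimum of `V(f,W)` over open `W ⊇ A`. -/
def totVarSet {X : Type u} [PseudoMetricSpace X] [MeasurableSpace X]
    (μ : Measure X) (f : X → ℝ) (A : Set X) : ℝ≥0∞ :=
  ⨅ (W : Set X) (_ : IsOpen W) (_ : A ⊆ W), totVarOn μ f W

/-- `f` is of bounded variation: locally integrable and `V(f,X) < ∞`. -/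
def IsBV {X : Type u} [MetricSpace X] [MeasurableSpace X]
    (μ : Measure X) (f : X → ℝ) : Prop :=
  LocallyIntegrable f μ ∧ totVarOn μ f Set.univ < ⊤

/-- `(X,d,μ)` supports a `1`-Poincaré inequality with constant `CP`. -/
def SupportsPoincare {X : Type u} [MetricSpace X] [MeasurableSpace X]
    (μ : Measure X) (CP : ℝ) : Prop :=
  ∀ u : X → ℝ, LocallyLipschitzOnSet u Set.univ →
    ∀ g : X → ℝ, (∀ x, 0 ≤ g x) → Measurable g → IsUpperGradientOf g u →
      ∀ (x : X) (r : ℝ), 0 < r →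
        (⨍ y in ball x r, |u y - (⨍ z in ball x r, u z ∂μ)| ∂μ) ≤
          CP * r * (⨍ y in ball x r, g y ∂μ)

/-- Standing assumptions: a complete geodesic metric measure space with at least two
points, whose measure is doubling and supports a 1-Poincaré inequality. -/
def GoodSpace (X : Type u) [MetricSpace X] [MeasurableSpace X]
    (μ : Measure X) (Cd : ℝ≥0) (CP : ℝ) : Prop :=
  Nontrivial X ∧ CompleteSpace X ∧ IsGeodesic X ∧
    IsDoublingWith μ Cd ∧ SupportsPoincare μ CP

/-- The codimension-1 Hausdorff measure
`𝓗(A) = sup_{δ>0} inf { Σ μ(B_i)/r_i : 0 < r_i ≤ δ, A ⊆ ⋃ B_i }`,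
the infimum over countable coverings of `A` by balls (balls of nonpositive radius
are empty and contribute `0`). -/
def codimOneH {X : Type u} [PseudoMetricSpace X] [MeasurableSpace X]
    (μ : Measure X) (A : Set X) : ℝ≥0∞ :=
  ⨆ (δ : ℝ) (_ : 0 < δ),
    ⨅ (c : ℕ → X) (r : ℕ → ℝ) (_ : ∀ i, r i ≤ δ)
      (_ : A ⊆ ⋃ i, ball (c i) (r i)),
      ∑' i, if 0 < r i then μ (ball (c i) (r i)) / ENNReal.ofReal (r i) else 0

/-- The measure theoretic boundary `∂*E`. -/
def measBdry {X : Type u} [PseudoMetricSpace X] [MeasurableSpace X]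
    (μ : Measure X) (E : Set X) : Set X :=
  {x : X |
    0 < Filter.limsup (fun r : ℝ => μ (E ∩ ball x r) / μ (ball x r)) (𝓝[>] (0:ℝ)) ∧
    0 < Filter.limsup (fun r : ℝ => μ (Eᶜ ∩ ball x r) / μ (ball x r)) (𝓝[>] (0:ℝ))}

/-- `A` has density `0` at `x`. -/
def DensityZeroAt {X : Type u} [PseudoMetricSpace X] [MeasurableSpace X]
    (μ : Measure X) (A : Set X) (x : X) : Prop :=
  Tendsto (fun r : ℝ => μ (A ∩ ball x r) / μ (ball x r)) (𝓝[>] (0:ℝ)) (𝓝 0)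

/-- `A` has density `1` at `x`. -/
def DensityOneAt {X : Type u} [PseudoMetricSpace X] [MeasurableSpace X]
    (μ : Measure X) (A : Set X) (x : X) : Prop :=
  Tendsto (fun r : ℝ => μ (A ∩ ball x r) / μ (ball x r)) (𝓝[>] (0:ℝ)) (𝓝 1)

/-- `x` is a Lebesgue point of `u`. -/
def LebesguePointOf {X : Type u} [MetricSpace X] [MeasurableSpace X]
    (μ : Measure X) (u : X → ℝ) (x : X) : Prop :=
  Tendsto (fun r : ℝ => ⨍ y in ball x r, |u y - u x| ∂μ) (𝓝[>] (0:ℝ)) (𝓝 0)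

/-- `u` is a Borel representative whose value at each Lebesgue point equals the limit
of its ball averages. -/
def PreciseRep {X : Type u} [MetricSpace X] [MeasurableSpace X]
    (μ : Measure X) (u : X → ℝ) : Prop :=
  Measurable u ∧ ∀ (x : X) (c : ℝ),
    Tendsto (fun r : ℝ => ⨍ y in ball x r, u y ∂μ) (𝓝[>] (0:ℝ)) (𝓝 c) → u x = c

/-- The restricted maximal function `M_R ν (x) = sup_{0<r≤R} ν(B(x,r))/μ(B(x,r))`. -/
def restrMaximal {X : Type u} [PseudoMetricSpace X] [MeasurableSpace X]
    (μ ν : Measure X) (R : ℝ) (x : X) : ℝ≥0∞ :=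
  ⨆ (r : ℝ) (_ : 0 < r) (_ : r ≤ R), ν (ball x r) / μ (ball x r)

/-- `F_g(x,y)`: the infimum of `∫_γ g ds` over 1-Lipschitz curves `γ : [0,L] → Z`
joining `x` to `y` (the infimum over the empty set is `∞`). -/
def curveInf {Z : Type u} [PseudoMetricSpace Z] (g : Z → ℝ) (x y : Z) : ℝ≥0∞ :=
  ⨅ (L : ℝ) (_ : 0 ≤ L) (γ : ℝ → Z) (_ : LipschitzOnWith 1 γ (Icc 0 L))
    (_ : γ 0 = x) (_ : γ L = y),
    ∫⁻ t in Icc (0:ℝ) L, ENNReal.ofReal (g (γ t))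

/-- Weak-star convergence of measures: test against continuous, compactly
supported functions. -/
def WeakStar {Z : Type u} [MetricSpace Z] [MeasurableSpace Z]
    (ν : ℕ → Measure Z) (m : Measure Z) : Prop :=
  ∀ φ : Z → ℝ, Continuous φ → HasCompactSupport φ →
    Tendsto (fun n => ∫ x, φ x ∂(ν n)) atTop (𝓝 (∫ x, φ x ∂m))

/-- `φ ∈ BV_c(U)`: a BV function whose support is compact and contained in `U`. -/
def MemBVc {X : Type u} [MetricSpace X] [MeasurableSpace X]
    (μ : Measure X) (φ : X → ℝ) (U : Set X) : Prop :=
  IsBV μ φ ∧ IsCompact (tsupport φ) ∧ tsupport φ ⊆ U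

/-- A scale function varies slowly. -/
def IsScale {X : Type u} [MetricSpace X] (σ : X → ℝ) : Prop := ∀ x y, |σ x - σ y| ≤ dist x y / 100

lemma IsScale.continuous {X : Type u} [MetricSpace X] {σ : X → ℝ} (hσ : IsScale σ) : Continuous σ :=
  (LipschitzWith.of_dist_le_mul (K := 1) fun x y => by
    rw [Real.dist_eq, NNReal.coe_one, one_mul]
    exact (hσ x y).trans (by linarith [dist_nonneg (x := x) (y := y)])).continuous

section Doubling

variable {X : Type u} [MetricSpace X] [MeasurableSpace X] {μ : Measure X} {Cd : ℝ≥0}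

lemma IsDoublingWith.measure_ball_pos (hd : IsDoublingWith μ Cd) (x : X) {r : ℝ} (hr : 0 < r) :
    0 < μ (ball x r) := by
  have := (hd x (r / 2) (by positivity)).1
  rwa [mul_div_cancel₀ _ two_ne_zero] at this

lemma IsDoublingWith.constant_ne_zero (hd : IsDoublingWith μ Cd) (x : X) : Cd ≠ 0 := by
  rintro rfl
  have h := hd x 1 one_pos
  simpa using h.1.trans_le h.2.1

lemma IsDoublingWith.measure_ball_lt_top (hd : IsDoublingWith μ Cd) (x : X) (r : ℝ) :
    μ (ball x r) < ∞ := by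
  rcases le_or_gt r 0 with hr | hr
  · simp [ball_eq_empty.2 hr]
  · have h := (hd x r hr).2.2
    refine lt_of_not_ge fun h' => ?_
    rw [top_le_iff.1 h', ENNReal.mul_top (by simpa using hd.constant_ne_zero x)] at h
    exact lt_irrefl _ h

lemma IsDoublingWith.measure_ball_two_pow_le (hd : IsDoublingWith μ Cd) (x : X) {r : ℝ}
    (hr : 0 < r) (k : ℕ) : μ (ball x (2 ^ k * r)) ≤ (Cd : ℝ≥0∞) ^ k * μ (ball x r) := by
  induction k with
  | zero => simp
  | succ k ih =>
    have h := (hd x (2 ^ k * r) (by positivity)).2.1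
    rw [← mul_assoc, ← pow_succ'] at h
    calc _ ≤ _ := h
      _ ≤ Cd * ((Cd : ℝ≥0∞) ^ k * μ (ball x r)) := by gcongr
      _ = _ := by ring

lemma IsDoublingWith.measure_ball_le (hd : IsDoublingWith μ Cd) {x y : X} {R r : ℝ} (k : ℕ)
    (hr : 0 < r) (h : dist x y + R ≤ 2 ^ k * r) :
    μ (ball x R) ≤ (Cd : ℝ≥0∞) ^ k * μ (ball y r) :=
  (measure_mono (ball_subset_ball' (by linarith))).trans (hd.measure_ball_two_pow_le y hr k)

lemma IsDoublingWith.isLocallyFiniteMeasure (hd : IsDoublingWith μ Cd) :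
    IsLocallyFiniteMeasure μ :=
  ⟨fun x => ⟨ball x 1, ball_mem_nhds x one_pos, hd.measure_ball_lt_top x 1⟩⟩

lemma IsDoublingWith.totallyBounded_closedBall [OpensMeasurableSpace X]
    (hd : IsDoublingWith μ Cd) (x : X) (R : ℝ) : TotallyBounded (closedBall x R) := by
  rw [Metric.totallyBounded_iff]
  intro ε hε
  by_contra! hcov
  have key : ∀ s : Finset X, (∀ z ∈ s, z ∈ closedBall x R) →
      ∃ y, y ∈ closedBall x R ∧ ∀ z ∈ s, ε ≤ dist z y := by
    intro s _
    have := hcov s s.finite_toSet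
    rw [not_subset] at this
    obtain ⟨y, hy, hy'⟩ := this
    refine ⟨y, hy, fun z hz => ?_⟩
    simp only [mem_iUnion, not_exists] at hy'
    have := hy' z hz
    rw [mem_ball, not_lt, dist_comm] at this
    exact this
  obtain ⟨f, hf, hsep⟩ := exists_seq_of_forall_finset_exists (fun y => y ∈ closedBall x R)
    (fun z y => ε ≤ dist z y) key
  have hR : 0 ≤ R := by
    have := hf 0
    rw [mem_closedBall] at this
    exact dist_nonneg.trans this
  obtain ⟨k, hk⟩ := pow_unbounded_of_one_lt ((R + 1) / (ε / 4)) (one_lt_two)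
  have hk' : R + 1 ≤ 2 ^ k * (ε / 4) := by
    rw [div_lt_iff₀ (by positivity)] at hk
    exact hk.le
  have hdisj : Pairwise (Function.onFun Disjoint fun n => ball (f n) (ε / 4)) := by
    intro m n hmn
    have : ε ≤ dist (f m) (f n) := by
      rcases lt_or_gt_of_ne hmn with h | h
      · exact hsep m n h
      · rw [dist_comm]; exact hsep n m h
    exact ball_disjoint_ball (by linarith)
  have hlow : ∀ n, (Cd : ℝ≥0∞)⁻¹ ^ (k + 1) * μ (ball x 1) ≤ μ (ball (f n) (ε / 4)) := by
    intro n
    have hn := hf n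
    rw [mem_closedBall, dist_comm] at hn
    have h1 := hd.measure_ball_le (x := x) (y := f n) (R := 1) (r := ε / 4) (k + 1)
      (by positivity) (by rw [pow_succ]; linarith)
    have h0 : (Cd : ℝ≥0∞) ^ (k + 1) ≠ 0 :=
      pow_ne_zero _ (by simpa using hd.constant_ne_zero x)
    rw [← ENNReal.inv_pow, mul_comm, ← div_eq_mul_inv]
    exact ENNReal.div_le_of_le_mul (by rwa [mul_comm])
  have hpos : 0 < (Cd : ℝ≥0∞)⁻¹ ^ (k + 1) * μ (ball x 1) :=
    ENNReal.mul_pos (pow_ne_zero _ (by simp)) (hd.measure_ball_pos x one_pos).ne'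
  have hfin : μ (⋃ n, ball (f n) (ε / 4)) ≠ ∞ := by
    refine ((measure_mono (iUnion_subset fun n => ?_)).trans_lt
      (hd.measure_ball_lt_top x (R + ε))).ne
    have hn := hf n
    rw [mem_closedBall] at hn
    exact ball_subset_ball' (by linarith)
  have := Measure.finite_const_le_meas_of_disjoint_iUnion μ hpos
    (fun n => measurableSet_ball) hdisj hfin
  rw [show {i | (Cd : ℝ≥0∞)⁻¹ ^ (k + 1) * μ (ball x 1) ≤ μ (ball (f i) (ε / 4))} = univ from
    eq_univ_of_forall hlow] at this
  exact infinite_univ this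

lemma IsDoublingWith.properSpace [OpensMeasurableSpace X] [CompleteSpace X]
    (hd : IsDoublingWith μ Cd) : ProperSpace X :=
  ⟨fun x r => isCompact_iff_totallyBounded_isComplete.2
    ⟨hd.totallyBounded_closedBall x r, isClosed_closedBall.isComplete⟩⟩

end Doubling

section VariableScale

variable {X : Type u} [MetricSpace X] [MeasurableSpace X] [BorelSpace X]
  [SecondCountableTopology X] {μ : Measure X} {Cd : ℝ≥0} {σ : X → ℝ}

lemma measurable_measure_ball_scale (ν : Measure X) [SFinite ν] (hσ : Continuous σ) (a : ℝ) :
    Measurable fun x => ν (ball x (a * σ x)) := by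
  have hm : MeasurableSet {p : X × X | dist p.2 p.1 < a * σ p.1} :=
    (isOpen_lt (by fun_prop) (by fun_prop)).measurableSet
  exact measurable_measure_prodMk_left hm

lemma lintegral_measure_ball_div [SFinite μ] (ν : Measure X) [SFinite ν] (hσ : Continuous σ)
    (a : ℝ) (A : Set X) :
    ∫⁻ x in A, ν (ball x (a * σ x)) / μ (ball x (σ x)) ∂μ =
      ∫⁻ y, ∫⁻ x in A, (ball x (a * σ x)).indicator (fun _ => (μ (ball x (σ x)))⁻¹) y ∂μ ∂ν := by
  have h1 : Measurable fun x => (μ (ball x (σ x)))⁻¹ := by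
    have h := measurable_measure_ball_scale μ hσ 1
    simp only [one_mul] at h
    exact h.inv
  have hm : MeasurableSet {p : X × X | dist p.2 p.1 < a * σ p.1} :=
    (isOpen_lt (by fun_prop) (by fun_prop)).measurableSet
  rw [lintegral_lintegral_swap]
  · refine lintegral_congr fun x => ?_
    rw [lintegral_indicator measurableSet_ball, setLIntegral_const, div_eq_mul_inv, mul_comm]
  · exact ((h1.comp measurable_snd).indicator
      (measurable_swap hm) : Measurable fun p : X × X =>
        {p : X × X | dist p.1 p.2 < a * σ p.2}.indicator
          (fun p => (μ (ball p.2 (σ p.2)))⁻¹) p).aemeasurable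

lemma lintegral_measure_ball_div_le [SFinite μ] (hd : IsDoublingWith μ Cd) (hσ : IsScale σ)
    (ν : Measure X) [SFinite ν] {A S : Set X} (hA : MeasurableSet A) (hpos : ∀ x ∈ A, 0 < σ x)
    (hS : MeasurableSet S) (hAS : ∀ x ∈ A, ball x (8 * σ x) ⊆ S) :
    ∫⁻ x in A, ν (ball x (8 * σ x)) / μ (ball x (σ x)) ∂μ ≤ (Cd : ℝ≥0∞) ^ 5 * ν S := by
  rw [lintegral_measure_ball_div ν hσ.continuous]
  have key : ∀ y, ∫⁻ x in A, (ball x (8 * σ x)).indicator (fun _ => (μ (ball x (σ x)))⁻¹) y ∂μ ≤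
      S.indicator (fun _ => (Cd : ℝ≥0∞) ^ 5) y := by
    intro y
    have hCd : (Cd : ℝ≥0∞) ^ 5 ≠ 0 := pow_ne_zero _ (by simpa using hd.constant_ne_zero y)
    have hCd' : (Cd : ℝ≥0∞) ^ 5 ≠ ∞ := ENNReal.pow_ne_top ENNReal.coe_ne_top
    have hcomp : ∀ x ∈ A, y ∈ ball x (8 * σ x) → y ∈ S ∧ 0 < σ y ∧ x ∈ ball y (9 * σ y) ∧
        (μ (ball x (σ x)))⁻¹ ≤ (Cd : ℝ≥0∞) ^ 5 * (μ (ball y (9 * σ y)))⁻¹ := by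
      intro x hx hy
      have hx0 := hpos x hx
      have hyS := hAS x hx hy
      rw [mem_ball, dist_comm] at hy
      have h1 := abs_le.1 (hσ x y)
      refine ⟨hyS, by linarith, by rw [mem_ball]; linarith, ?_⟩
      have h2 := hd.measure_ball_le (x := y) (y := x) (R := 9 * σ y) (r := σ x) 5 hx0
        (by rw [dist_comm]; linarith)
      calc (μ (ball x (σ x)))⁻¹ = (Cd : ℝ≥0∞) ^ 5 * ((Cd : ℝ≥0∞) ^ 5 * μ (ball x (σ x)))⁻¹ := by
            rw [ENNReal.mul_inv (.inl hCd) (.inl hCd'), ← mul_assoc,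
              ENNReal.mul_inv_cancel hCd hCd', one_mul]
        _ ≤ _ := by gcongr
    by_cases hex : ∃ x ∈ A, y ∈ ball x (8 * σ x)
    · obtain ⟨x₀, hx₀, hy₀⟩ := hex
      obtain ⟨hyS, hy0, -, -⟩ := hcomp x₀ hx₀ hy₀
      rw [indicator_of_mem hyS]
      calc _ ≤ ∫⁻ x in A, (ball y (9 * σ y)).indicator
              (fun _ => (Cd : ℝ≥0∞) ^ 5 * (μ (ball y (9 * σ y)))⁻¹) x ∂μ := by
            refine setLIntegral_mono' hA fun x hx => ?_
            by_cases hyx : y ∈ ball x (8 * σ x)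
            · obtain ⟨-, -, h3, h4⟩ := hcomp x hx hyx
              rwa [indicator_of_mem hyx, indicator_of_mem h3]
            · rw [indicator_of_notMem hyx]
              exact zero_le
        _ ≤ ∫⁻ x, (ball y (9 * σ y)).indicator
              (fun _ => (Cd : ℝ≥0∞) ^ 5 * (μ (ball y (9 * σ y)))⁻¹) x ∂μ :=
            setLIntegral_le_lintegral _ _
        _ = (Cd : ℝ≥0∞) ^ 5 := by
            rw [lintegral_indicator measurableSet_ball, setLIntegral_const, mul_assoc,
              ENNReal.inv_mul_cancel (hd.measure_ball_pos y (by positivity)).ne'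
                (hd.measure_ball_lt_top y _).ne, mul_one]
    · push Not at hex
      rw [setLIntegral_congr_fun (g := fun _ => 0) hA
        fun x hx => indicator_of_notMem (hex x hx) _]
      simp
  calc _ ≤ ∫⁻ y, S.indicator (fun _ => (Cd : ℝ≥0∞) ^ 5) y ∂ν := lintegral_mono key
    _ = _ := by rw [lintegral_indicator hS, setLIntegral_const]

lemma measure_le_lintegral_measure_ball_div [SFinite μ] (hd : IsDoublingWith μ Cd)
    (hσ : IsScale σ) (ν : Measure X) [SFinite ν] {A S : Set X} (hA : MeasurableSet A)
    (hpos : ∀ y ∈ A, 0 < σ y) (hAS : ∀ y ∈ A, ball y (σ y) ⊆ S) :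
    ν A ≤ (Cd : ℝ≥0∞) ^ 2 * ∫⁻ x in S, ν (ball x (2 * σ x)) / μ (ball x (σ x)) ∂μ := by
  rw [lintegral_measure_ball_div ν hσ.continuous]
  rcases A.eq_empty_or_nonempty with rfl | ⟨a, -⟩
  · simp
  have hCd : (Cd : ℝ≥0∞) ^ 2 ≠ 0 := pow_ne_zero _ (by simpa using hd.constant_ne_zero a)
  have hCd' : (Cd : ℝ≥0∞) ^ 2 ≠ ∞ := ENNReal.pow_ne_top ENNReal.coe_ne_top
  have key : ∀ y ∈ A, ((Cd : ℝ≥0∞) ^ 2)⁻¹ ≤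
      ∫⁻ x in S, (ball x (2 * σ x)).indicator (fun _ => (μ (ball x (σ x)))⁻¹) y ∂μ := by
    intro y hy
    have hy0 := hpos y hy
    calc ((Cd : ℝ≥0∞) ^ 2)⁻¹ = ∫⁻ _ in ball y (σ y), ((Cd : ℝ≥0∞) ^ 2 * μ (ball y (σ y)))⁻¹ ∂μ := by
          rw [setLIntegral_const, ENNReal.mul_inv (.inl hCd) (.inl hCd'), mul_assoc,
            ENNReal.inv_mul_cancel (hd.measure_ball_pos y hy0).ne'
                (hd.measure_ball_lt_top y _).ne, mul_one]
      _ ≤ ∫⁻ x in ball y (σ y),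
            (ball x (2 * σ x)).indicator (fun _ => (μ (ball x (σ x)))⁻¹) y ∂μ := by
          refine setLIntegral_mono' measurableSet_ball fun x hx => ?_
          rw [mem_ball] at hx
          have h1 := abs_le.1 (hσ x y)
          rw [indicator_of_mem (by rw [mem_ball, dist_comm]; linarith)]
          gcongr
          exact hd.measure_ball_le 2 hy0 (by linarith)
      _ ≤ _ := lintegral_mono_set (hAS y hy)
  calc ν A = (Cd : ℝ≥0∞) ^ 2 * ∫⁻ _ in A, ((Cd : ℝ≥0∞) ^ 2)⁻¹ ∂ν := by
        rw [setLIntegral_const, ← mul_assoc, ENNReal.mul_inv_cancel hCd hCd', one_mul]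
    _ ≤ (Cd : ℝ≥0∞) ^ 2 * ∫⁻ y in A, ∫⁻ x in S,
          (ball x (2 * σ x)).indicator (fun _ => (μ (ball x (σ x)))⁻¹) y ∂μ ∂ν := by
        gcongr 1
        exact setLIntegral_mono' hA key
    _ ≤ _ := by
        gcongr 1
        exact setLIntegral_le_lintegral _ _

end VariableScale

section LowerLip

variable {X : Type u} [MetricSpace X]

/-- The difference quotient `r⁻¹ sup_{y ∈ B(x,r)} |u y - u x|`. -/
def oscQuot (u : X → ℝ) (r : ℝ) (x : X) : ℝ≥0∞ :=
  ⨆ y ∈ ball x r, ENNReal.ofReal (|u y - u x| / r)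

lemma lipConst_eq (u : X → ℝ) (x : X) :
    lipConst u x = liminf (fun r => oscQuot u r x) (𝓝[>] (0 : ℝ)) := rfl

/-- The version of `lipConst` along dyadic radii. -/
def lipDyadic (u : X → ℝ) (x : X) : ℝ≥0∞ :=
  liminf (fun k : ℕ => oscQuot u ((1 / 2) ^ k) x) atTop

lemma oscQuot_le_of_le {u : X → ℝ} {x : X} {r s : ℝ} (hr : 0 < r) (hrs : r ≤ s)
    (hsr : s ≤ 2 * r) : oscQuot u r x ≤ 2 * oscQuot u s x := by
  refine iSup₂_le fun y hy => ?_
  calc ENNReal.ofReal (|u y - u x| / r) ≤ ENNReal.ofReal (2 * (|u y - u x| / s)) := by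
        apply ENNReal.ofReal_le_ofReal
        have hs : 0 < s := hr.trans_le hrs
        rw [div_le_iff₀ hr, ← mul_div_assoc, div_mul_eq_mul_div, le_div_iff₀ hs]
        nlinarith [abs_nonneg (u y - u x)]
    _ = 2 * ENNReal.ofReal (|u y - u x| / s) := by
        rw [ENNReal.ofReal_mul zero_le_two, ENNReal.ofReal_ofNat]
    _ ≤ _ := by
        gcongr
        exact le_iSup₂_of_le (f := fun y (_ : y ∈ ball x s) => ENNReal.ofReal (|u y - u x| / s)) y
          (ball_subset_ball hrs hy) le_rfl

lemma lipDyadic_le_two_mul_lipConst (u : X → ℝ) (x : X) : lipDyadic u x ≤ 2 * lipConst u x := by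
  rcases eq_or_ne (lipConst u x) ∞ with h | h
  · simp [h]
  have key : ∀ b, lipConst u x < b → lipDyadic u x ≤ 2 * b := by
    intro b hb
    have hfreq : ∃ᶠ r in 𝓝[>] (0 : ℝ), oscQuot u r x < b := frequently_lt_of_liminf_lt (by isBoundedDefault) hb
    refine liminf_le_of_frequently_le' (frequently_atTop.2 fun N => ?_)
    have hev : ∀ᶠ r in 𝓝[>] (0 : ℝ), r ∈ Ioo (0 : ℝ) ((1 / 2) ^ N) :=
      Ioo_mem_nhdsGT (by positivity)
    obtain ⟨r, hr, hr0, hrN⟩ := (hfreq.and_eventually hev).exists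
    have hr1 : r ≤ 1 := hrN.le.trans (pow_le_one₀ (by norm_num) (by norm_num))
    obtain ⟨k, hk1, hk2⟩ := exists_nat_pow_near_of_lt_one hr0 hr1
      (show (0 : ℝ) < 1 / 2 by norm_num) (by norm_num)
    refine ⟨k + 1, ?_, ?_⟩
    · by_contra hlt
      have : (1 / 2 : ℝ) ^ N ≤ (1 / 2) ^ (k + 1) :=
        pow_le_pow_of_le_one (by norm_num) (by norm_num) (by omega)
      linarith
    · refine (oscQuot_le_of_le (by positivity) hk1.le ?_).trans (by gcongr)
      rw [pow_succ]; linarith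
  refine ENNReal.le_of_forall_pos_le_add fun ε hε _ => ?_
  calc lipDyadic u x ≤ 2 * (lipConst u x + ε / 2) :=
        key _ (ENNReal.lt_add_right h (by simpa using hε.ne'))
    _ = _ := by rw [mul_add, ENNReal.mul_div_cancel (by simp) (by simp)]

lemma measurable_lipDyadic [MeasurableSpace X] [BorelSpace X] {u : X → ℝ} (hu : Continuous u) :
    Measurable (lipDyadic u) := by
  refine Measurable.liminf fun k => ?_
  have hr : (0 : ℝ) < (1 / 2) ^ k := by positivity
  set r : ℝ := (1 / 2) ^ k
  refine LowerSemicontinuous.measurable fun x a ha => ?_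
  simp only [oscQuot, lt_iSup_iff] at ha
  obtain ⟨y, hy, hya⟩ := ha
  have hcont : Continuous fun z => ENNReal.ofReal (|u y - u z| / r) :=
    ENNReal.continuous_ofReal.comp (by fun_prop)
  have h1 : ∀ᶠ z in 𝓝 x, a < ENNReal.ofReal (|u y - u z| / r) :=
    hcont.continuousAt.eventually_const_lt hya
  have h2 : ∀ᶠ z in 𝓝 x, y ∈ ball z r := by
    simp_rw [mem_ball]
    exact (continuous_const.dist continuous_id).continuousAt.eventually_lt_const hy
  filter_upwards [h1, h2] with z hz1 hz2
  exact hz1.trans_le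
    (le_iSup₂_of_le (f := fun y (_ : y ∈ ball z r) => ENNReal.ofReal (|u y - u z| / r)) y hz2 le_rfl)

lemma oscQuot_le_of_lipschitz {u : X → ℝ} {x : X} {r s : ℝ} {F : ℝ≥0∞} (hr : 0 < r) (hrs : r ≤ s)
    (h : ∀ y ∈ ball x s, ENNReal.ofReal |u y - u x| ≤ F * ENNReal.ofReal (dist y x)) :
    oscQuot u r x ≤ F := by
  refine iSup₂_le fun y hy => ?_
  rw [ENNReal.ofReal_div_of_pos hr]
  refine ENNReal.div_le_of_le_mul ((h y (ball_subset_ball hrs hy)).trans ?_)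
  gcongr
  exact (mem_ball.1 hy).le

lemma lipDyadic_le_of_lipschitzOnWith {u : X → ℝ} {x : X} {L : ℝ≥0} {s : Set X}
    (h : LipschitzOnWith L u s) (hs : ball x 1 ⊆ s) : lipDyadic u x ≤ L := by
  refine liminf_le_of_le (by isBoundedDefault) fun b hb => ?_
  obtain ⟨k, hk⟩ := hb.exists
  refine hk.trans (oscQuot_le_of_lipschitz (s := 1) (by positivity)
    (pow_le_one₀ (by norm_num) (by norm_num)) fun y hy => ?_)
  have := h.dist_le_mul y (hs hy) x (hs (mem_ball_self one_pos))
  rw [Real.dist_eq] at this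
  rw [← ENNReal.ofReal_coe_nnreal, ← ENNReal.ofReal_mul L.coe_nonneg]
  exact ENNReal.ofReal_le_ofReal this

lemma LocallyLipschitzOnSet.continuous {u : X → ℝ} (hu : LocallyLipschitzOnSet u univ) :
    Continuous u := by
  refine continuous_iff_continuousAt.2 fun x => ?_
  obtain ⟨L, hL⟩ := hu (closedBall x 1) isClosed_closedBall isBounded_closedBall (subset_univ _)
  exact hL.continuousOn.continuousAt (closedBall_mem_nhds x one_pos)

lemma abs_deriv_comp_le_lipDyadic {u : X → ℝ} {γ : ℝ → X} (hγ : LipschitzWith 1 γ) {t : ℝ}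
    (hd : DifferentiableAt ℝ (fun s => u (γ s)) t) :
    ENNReal.ofReal |deriv (fun s => u (γ s)) t| ≤ lipDyadic u (γ t) := by
  by_contra! hlt
  obtain ⟨c, hc0, hc1, hc2⟩ := ENNReal.lt_iff_exists_real_btwn.1 hlt
  have hc : c < |deriv (fun s => u (γ s)) t| := (ENNReal.ofReal_lt_ofReal_iff_of_nonneg hc0).1 hc2
  obtain ⟨c', hcc', hc'⟩ := exists_between hc
  have hc'0 : 0 < c' := hc0.trans_lt hcc'
  refine hc1.not_ge (le_liminf_of_le (by isBoundedDefault) ?_)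
  have hslope : ∀ᶠ s in 𝓝[≠] t, c' < |slope (fun s => u (γ s)) t s| :=
    (hasDerivAt_iff_tendsto_slope.1 hd.hasDerivAt).abs.eventually_const_lt hc'
  rw [eventually_nhdsWithin_iff, Metric.eventually_nhds_iff] at hslope
  obtain ⟨ε, hε, hball⟩ := hslope
  rcases hc0.eq_or_lt with rfl | hc0
  · simp
  have hsmall : ∀ᶠ k : ℕ in atTop, (1 / 2 : ℝ) ^ k < ε :=
    (tendsto_pow_atTop_nhds_zero_of_lt_one (by norm_num) (by norm_num)).eventually_lt_const hε
  filter_upwards [hsmall] with k hk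
  have hr : (0 : ℝ) < (1 / 2) ^ k := by positivity
  set r : ℝ := (1 / 2) ^ k
  have hq : c / c' < 1 := (div_lt_one hc'0).2 hcc'
  have hh : 0 < r * (c / c') := by positivity
  have hhr : r * (c / c') < r := by nlinarith
  have h1 := hball (y := t + r * (c / c')) (by
    rw [Real.dist_eq, add_sub_cancel_left, abs_of_pos hh]; linarith)
    (by simp only [mem_compl_iff, mem_singleton_iff]; linarith)
  rw [slope_def_field, add_sub_cancel_left, abs_div, abs_of_pos hh, lt_div_iff₀ hh] at h1
  refine le_iSup₂_of_le (f := fun y (_ : y ∈ ball (γ t) r) =>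
    ENNReal.ofReal (|u y - u (γ t)| / r)) (γ (t + r * (c / c'))) ?_ ?_
  · rw [mem_ball]
    refine (hγ.dist_le_mul _ _).trans_lt ?_
    rw [Real.dist_eq, add_sub_cancel_left, abs_of_pos hh, NNReal.coe_one, one_mul]
    exact hhr
  · apply ENNReal.ofReal_le_ofReal
    rw [le_div_iff₀ hr]
    refine le_trans (le_of_eq ?_) h1.le
    field_simp

lemma isUpperGradientOf_lipDyadic [MeasurableSpace X] [BorelSpace X] {u : X → ℝ}
    (hu : LocallyLipschitzOnSet u univ) :
    IsUpperGradientOf (fun x => (lipDyadic u x).toReal) u := by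
  intro L hL γ hγ
  set δ : ℝ → X := fun t => γ (projIcc 0 L hL t) with hδdef
  have hδeq : ∀ t ∈ Icc 0 L, δ t = γ t := fun t ht => by simp [hδdef, projIcc_of_mem hL ht]
  have hδ : LipschitzWith 1 δ := by
    have := (lipschitzOnWith_iff_restrict.1 hγ).comp (LipschitzWith.projIcc hL)
    rwa [one_mul] at this
  have hrange : ∀ t, δ t ∈ closedBall (γ 0) L := by
    intro t
    have h0 : (0 : ℝ) ∈ Icc 0 L := ⟨le_rfl, hL⟩
    have ht := (projIcc 0 L hL t).2
    have := hγ.dist_le_mul _ ht 0 h0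
    rw [NNReal.coe_one, one_mul, Real.dist_eq, sub_zero, abs_of_nonneg ht.1] at this
    exact this.trans ht.2
  obtain ⟨M, hM⟩ := hu (closedBall (γ 0) (L + 1)) isClosed_closedBall isBounded_closedBall
    (subset_univ _)
  have hbound : ∀ t, lipDyadic u (δ t) ≤ M := fun t =>
    lipDyadic_le_of_lipschitzOnWith hM
      ((ball_subset_ball' (by have := mem_closedBall.1 (hrange t); linarith)).trans
        ball_subset_closedBall)
  have hf : LipschitzWith (M * 1) fun t => u (δ t) := by
    rw [← lipschitzOnWith_univ]
    refine hM.comp hδ.lipschitzOnWith fun t _ => ?_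
    exact closedBall_subset_closedBall (by linarith) (hrange t)
  have hint : IntervalIntegrable (fun t => (lipDyadic u (δ t)).toReal) volume 0 L := by
    have hmeas : Measurable fun t => (lipDyadic u (δ t)).toReal :=
      ((measurable_lipDyadic hu.continuous).comp hδ.continuous.measurable).ennreal_toReal
    refine (intervalIntegrable_const (c := (M : ℝ))).mono_fun hmeas.aestronglyMeasurable
      (Eventually.of_forall fun t => ?_)
    simp only [Real.norm_of_nonneg ENNReal.toReal_nonneg, Real.norm_of_nonneg M.coe_nonneg]
    exact ENNReal.toReal_le_coe_of_le_coe (hbound t)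
  have hftc := (hf.lipschitzOnWith (s := uIcc 0 L)).absolutelyContinuousOnInterval.integral_deriv_eq_sub
  have h0 : δ 0 = γ 0 := hδeq 0 ⟨le_rfl, hL⟩
  have h1 : δ L = γ L := hδeq L ⟨hL, le_rfl⟩
  simp only [h0, h1] at hftc
  rw [abs_sub_comm, ← hftc, ← Real.norm_eq_abs]
  refine (intervalIntegral.norm_integral_le_of_norm_le hL ?_ hint).trans (le_of_eq ?_)
  · filter_upwards [hf.ae_differentiableAt_real] with t ht _
    rw [Real.norm_eq_abs, ← ENNReal.ofReal_le_iff_le_toReal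
      ((hbound t).trans_lt ENNReal.coe_lt_top).ne]
    exact abs_deriv_comp_le_lipDyadic hδ ht
  · refine intervalIntegral.integral_congr fun t ht => ?_
    rw [uIcc_of_le hL] at ht
    simp only [hδeq t ht]

lemma SupportsPoincare.lintegral_le [MeasurableSpace X] [BorelSpace X] {μ : Measure X} {Cd : ℝ≥0}
    {CP : ℝ} (hP : SupportsPoincare μ CP) (hCP : 0 ≤ CP) (hd : IsDoublingWith μ Cd) {u : X → ℝ}
    (hu : LocallyLipschitzOnSet u univ) (x : X) {r : ℝ} (hr : 0 < r) :
    ∃ c : ℝ, ∫⁻ y in ball x r, ‖u y - c‖ₑ ∂μ ≤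
      2 * ENNReal.ofReal CP * ENNReal.ofReal r * ∫⁻ y in ball x r, lipConst u y ∂μ := by
  refine ⟨⨍ z in ball x r, u z ∂μ, ?_⟩
  set c := ⨍ z in ball x r, u z ∂μ
  obtain ⟨M, hM⟩ := hu (closedBall x (r + 1)) isClosed_closedBall isBounded_closedBall
    (subset_univ _)
  have hfin : IsFiniteMeasure (μ.restrict (ball x r)) :=
    isFiniteMeasure_restrict.2 (hd.measure_ball_lt_top x r).ne
  have hbound : ∀ y ∈ ball x r, lipDyadic u y ≤ M := fun y hy =>
    lipDyadic_le_of_lipschitzOnWith hM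
      ((ball_subset_ball' (by have := mem_ball.1 hy; linarith)).trans ball_subset_closedBall)
  have hg := measurable_lipDyadic hu.continuous
  have hgint : Integrable (fun y => (lipDyadic u y).toReal) (μ.restrict (ball x r)) := by
    refine (integrable_const (M : ℝ)).mono' hg.ennreal_toReal.aestronglyMeasurable
      ((ae_restrict_iff' measurableSet_ball).2 (Eventually.of_forall fun y hy => ?_))
    rw [Real.norm_of_nonneg ENNReal.toReal_nonneg]
    exact ENNReal.toReal_le_coe_of_le_coe (hbound y hy)
  have huint : Integrable (fun y => u y - c) (μ.restrict (ball x r)) := by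
    refine Integrable.sub ?_ (integrable_const c)
    refine (integrable_const (|u x| + M * r : ℝ)).mono' hu.continuous.aestronglyMeasurable
      ((ae_restrict_iff' measurableSet_ball).2 (Eventually.of_forall fun y hy => ?_))
    have h1 := hM.dist_le_mul y
      (closedBall_subset_closedBall (by linarith) (ball_subset_closedBall hy)) x
      (mem_closedBall_self (by linarith))
    have h2 : (M : ℝ) * dist y x ≤ M * r := by gcongr; exact (mem_ball.1 hy).le
    rw [Real.dist_eq] at h1
    rw [Real.norm_eq_abs]
    calc |u y| = |u x + (u y - u x)| := by ring_nf
      _ ≤ |u x| + |u y - u x| := abs_add_le _ _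
      _ ≤ _ := by linarith
  have h := hP u hu _ (fun _ => ENNReal.toReal_nonneg) hg.ennreal_toReal
    (isUpperGradientOf_lipDyadic hu) x r hr
  have hm : 0 < μ.real (ball x r) :=
    ENNReal.toReal_pos (hd.measure_ball_pos x hr).ne' (hd.measure_ball_lt_top x r).ne
  change (⨍ y in ball x r, |u y - c| ∂μ) ≤ _ at h
  clear_value c
  rw [setAverage_eq, setAverage_eq, smul_eq_mul, smul_eq_mul, ← mul_assoc, mul_comm (CP * r),
    mul_assoc, mul_le_mul_iff_right₀ (inv_pos.2 hm)] at h
  calc ∫⁻ y in ball x r, ‖u y - c‖ₑ ∂μ = ENNReal.ofReal (∫ y in ball x r, |u y - c| ∂μ) :=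
        (ofReal_integral_norm_eq_lintegral_enorm huint).symm
    _ ≤ ENNReal.ofReal (CP * r * ∫ y in ball x r, (lipDyadic u y).toReal ∂μ) :=
        ENNReal.ofReal_le_ofReal h
    _ = ENNReal.ofReal CP * ENNReal.ofReal r * ∫⁻ y in ball x r, lipDyadic u y ∂μ := by
        rw [ENNReal.ofReal_mul (by positivity), ENNReal.ofReal_mul hCP,
          ofReal_integral_eq_lintegral_ofReal hgint
            (Eventually.of_forall fun _ => ENNReal.toReal_nonneg)]
        congr 1
        refine setLIntegral_congr_fun measurableSet_ball fun y hy => ?_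
        exact ENNReal.ofReal_toReal ((hbound y hy).trans_lt ENNReal.coe_lt_top).ne
    _ ≤ ENNReal.ofReal CP * ENNReal.ofReal r * ∫⁻ y in ball x r, 2 * lipConst u y ∂μ := by
        gcongr
        exact lipDyadic_le_two_mul_lipConst u _
    _ = _ := by rw [lintegral_const_mul' _ _ (by simp)]; ring

end LowerLip

section LimitMeasure

variable {X : Type u} [MetricSpace X] [MeasurableSpace X]

/-- Balls satisfy a Poincaré inequality for `w` with the measure `ν` on the right-hand side. -/
def HasPoincareBound (μ ν : Measure X) (C : ℝ≥0∞) (w : X → ℝ) : Prop :=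
  ∀ (x : X) (r : ℝ), 0 < r → ∀ ε : ℝ≥0∞, ε ≠ 0 → ∃ c : ℝ,
    ∫⁻ y in ball x r, ‖w y - c‖ₑ ∂μ ≤ C * ENNReal.ofReal r * ν (ball x (2 * r)) + ε

lemma HasPoincareBound.sub {μ ν₁ ν₂ : Measure X} {C : ℝ≥0∞} {u v : X → ℝ}
    (hu : HasPoincareBound μ ν₁ C u) (hv : HasPoincareBound μ ν₂ C v)
    (hum : AEStronglyMeasurable u μ) :
    HasPoincareBound μ (ν₁ + ν₂) C (fun x => u x - v x) := by
  intro x r hr ε hε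
  obtain ⟨a, ha⟩ := hu x r hr (ε / 2) (by simpa using hε)
  obtain ⟨b, hb⟩ := hv x r hr (ε / 2) (by simpa using hε)
  refine ⟨a - b, ?_⟩
  have hmeas : AEMeasurable (fun y => ‖u y - a‖ₑ) (μ.restrict (ball x r)) :=
    (hum.aemeasurable.sub_const a).enorm.restrict
  calc ∫⁻ y in ball x r, ‖u y - v y - (a - b)‖ₑ ∂μ
      ≤ ∫⁻ y in ball x r, (‖u y - a‖ₑ + ‖v y - b‖ₑ) ∂μ := by
        refine lintegral_mono fun y => ?_
        rw [← enorm_neg (v y - b)]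
        refine le_trans (le_of_eq ?_) (enorm_add_le _ _)
        congr 1; ring
    _ = (∫⁻ y in ball x r, ‖u y - a‖ₑ ∂μ) + ∫⁻ y in ball x r, ‖v y - b‖ₑ ∂μ :=
        lintegral_add_left' hmeas _
    _ ≤ _ := add_le_add ha hb
    _ = C * ENNReal.ofReal r * (ν₁ + ν₂) (ball x (2 * r)) + (ε / 2 + ε / 2) := by
        rw [Measure.add_apply]; ring
    _ = _ := by rw [ENNReal.add_halves]

variable [BorelSpace X]

open TopologicalSpace in
lemma exists_finiteMeasure_frequently_le (m : ℕ → Measure X) {M : ℝ≥0∞} (hM : M ≠ ∞)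
    (hm : ∀ i, m i univ ≤ M) :
    ∃ ν : Measure X, IsFiniteMeasure ν ∧
      ∀ K, IsCompact K → ∀ ε : ℝ≥0∞, ε ≠ 0 → ∃ᶠ i in atTop, m i K ≤ ν K + ε := by
  obtain ⟨U, hU⟩ := Ultrafilter.exists_le (atTop : Filter ℕ)
  have hle : ∀ i A, m i A ≤ M := fun i A => (measure_mono (subset_univ A)).trans (hm i)
  have hex : ∀ A : Set X, ∃ l : ℝ≥0, Tendsto (fun i => m i A) U (𝓝 (l : ℝ≥0∞)) := by
    intro A
    obtain ⟨l, -, hl⟩ := isCompact_univ.ultrafilter_le_nhds (U.map fun i => m i A) (by simp)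
    have hlM : l ≤ M := le_of_tendsto' (show Tendsto (fun i => m i A) U (𝓝 l) from hl)
      fun i => hle i A
    lift l to ℝ≥0 using (hlM.trans_lt hM.lt_top).ne
    exact ⟨l, hl⟩
  choose l hl using hex
  let c : Content X :=
    { toFun := fun K => l K
      mono' := fun K₁ K₂ h => ENNReal.coe_le_coe.1
        (le_of_tendsto_of_tendsto' (hl K₁) (hl K₂) fun i => measure_mono h)
      sup_disjoint' := fun K₁ K₂ hd _ h₂ => by
        have h := (hl K₁).add (hl K₂)
        rw [← ENNReal.coe_add] at h
        refine ENNReal.coe_injective (tendsto_nhds_unique (hl (K₁ ⊔ K₂ : Compacts X)) ?_)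
        refine h.congr fun i => ?_
        rw [Compacts.coe_sup, measure_union hd h₂.measurableSet]
      sup_le' := fun K₁ K₂ => by
        have h := (hl K₁).add (hl K₂)
        rw [← ENNReal.coe_add] at h
        refine ENNReal.coe_le_coe.1
          (le_of_tendsto_of_tendsto' (hl (K₁ ⊔ K₂ : Compacts X)) h fun i => ?_)
        rw [Compacts.coe_sup]
        exact measure_union_le _ _ }
  have hc : ∀ K : Compacts X, c K = l K := fun K => rfl
  refine ⟨c.measure, ⟨?_⟩, fun K hK ε hε => ?_⟩
  · rw [c.measure_apply MeasurableSet.univ, c.outerMeasure_of_isOpen univ isOpen_univ]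
    refine (iSup₂_le fun K _ => ?_ : _ ≤ M).trans_lt hM.lt_top
    rw [hc]
    exact le_of_tendsto' (hl K) fun i => hle i K
  · have h1 : (l K : ℝ≥0∞) ≤ c.measure K := by
      rw [c.measure_apply hK.measurableSet]
      exact c.le_outerMeasure_compacts ⟨K, hK⟩
    have h2 : ∀ᶠ i in U, m i K < l K + ε :=
      (hl K).eventually_lt_const (ENNReal.lt_add_right ENNReal.coe_ne_top hε)
    refine Frequently.filter_mono (h2.frequently) hU |>.mono fun i hi => hi.le.trans (by gcongr)

lemma IsBV.exists_hasPoincareBound [ProperSpace X] {μ : Measure X} {Cd : ℝ≥0} {CP : ℝ}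
    (hd : IsDoublingWith μ Cd) (hP : SupportsPoincare μ CP) (hCP : 0 ≤ CP) {u : X → ℝ}
    (hu : IsBV μ u) :
    ∃ ν : Measure X, IsFiniteMeasure ν ∧ HasPoincareBound μ ν (2 * ENNReal.ofReal CP) u := by
  obtain ⟨M, hM, hMtop⟩ := ENNReal.lt_iff_exists_nnreal_btwn.1 hu.2
  simp only [totVarOn, iInf_lt_iff] at hM
  obtain ⟨us, hlip, hconv, hlim⟩ := hM
  obtain ⟨φ, hφ, hφM⟩ := extraction_of_frequently_atTop
    (frequently_lt_of_liminf_lt (by isBoundedDefault) hlim)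
  obtain ⟨ν, hν, hνle⟩ := exists_finiteMeasure_frequently_le
    (fun i => μ.withDensity (lipConst (us (φ i)))) (M := M) ENNReal.coe_ne_top fun i => by
      rw [withDensity_apply _ MeasurableSet.univ]; exact (hφM i).le
  refine ⟨ν, hν, fun x r hr ε hε => ?_⟩
  set C : ℝ≥0∞ := 2 * ENNReal.ofReal CP * ENNReal.ofReal r
  have hC : C ≠ ∞ := by simp [C, ENNReal.mul_eq_top]
  obtain ⟨η, hη, hηε⟩ : ∃ η : ℝ≥0∞, η ≠ 0 ∧ C * η ≤ ε / 2 := by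
    refine ⟨(ε / 2) / (C + 1), ?_, ?_⟩
    · exact (ENNReal.div_pos (by simpa using hε) (by simp [hC])).ne'
    · calc C * (ε / 2 / (C + 1)) ≤ (C + 1) * (ε / 2 / (C + 1)) := by gcongr; exact le_self_add
        _ ≤ _ := ENNReal.mul_div_le
  have hcl := hconv (closedBall x r) isClosed_closedBall isBounded_closedBall (subset_univ _)
  have hev := (hcl.comp hφ.tendsto_atTop).eventually_lt_const
    (show (0 : ℝ≥0∞) < ε / 2 by simpa using hε)
  obtain ⟨i, hi1, hi2⟩ :=
    ((hνle (closedBall x r) (isCompact_closedBall x r) η hη).and_eventually hev).exists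
  simp only [Function.comp_apply] at hi2
  rw [withDensity_apply _ measurableSet_closedBall] at hi1
  obtain ⟨c, hc⟩ := hP.lintegral_le hCP hd (hlip (φ i)) x hr
  refine ⟨c, ?_⟩
  have hmeas : AEMeasurable (fun y => ‖us (φ i) y - c‖ₑ) (μ.restrict (ball x r)) :=
    ((hlip (φ i)).continuous.measurable.sub_const c).enorm.aemeasurable
  calc ∫⁻ y in ball x r, ‖u y - c‖ₑ ∂μ
      ≤ ∫⁻ y in ball x r, (‖us (φ i) y - c‖ₑ + ‖us (φ i) y - u y‖ₑ) ∂μ := by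
        refine lintegral_mono fun y => ?_
        rw [← enorm_neg (us (φ i) y - u y)]
        refine le_trans (le_of_eq ?_) (enorm_add_le _ _)
        congr 1; ring
    _ = (∫⁻ y in ball x r, ‖us (φ i) y - c‖ₑ ∂μ) + ∫⁻ y in ball x r, ‖us (φ i) y - u y‖ₑ ∂μ :=
        lintegral_add_left' hmeas _
    _ ≤ C * (ν (ball x (2 * r)) + η) + ε / 2 := by
        gcongr
        · refine hc.trans ?_
          gcongr
          refine (lintegral_mono_set ball_subset_closedBall).trans (hi1.trans ?_)
          gcongr
          exact closedBall_subset_ball (by linarith)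
        · refine (lintegral_mono_set ball_subset_closedBall).trans (le_trans (le_of_eq ?_) hi2.le)
          simp_rw [Real.enorm_eq_ofReal_abs]
    _ ≤ C * ν (ball x (2 * r)) + ε / 2 + ε / 2 := by
        rw [mul_add]
        gcongr
    _ = _ := by rw [add_assoc, ENNReal.add_halves]

/-- If `w` vanishes on at least half of a ball, then the Poincaré inequality controls `w` itself. -/
lemma HasPoincareBound.lintegral_enorm_le {μ ν : Measure X} {C : ℝ≥0∞} {w : X → ℝ}
    (hw : HasPoincareBound μ ν C w) {E : Set X} (hE : MeasurableSet E) (hE0 : ∀ x ∈ E, w x = 0)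
    {x : X} {r : ℝ} (hr : 0 < r) (hfin : μ (ball x r) ≠ ∞)
    (hhalf : 2 * μ (ball x r \ E) ≤ μ (ball x r)) :
    ∫⁻ y in ball x r, ‖w y‖ₑ ∂μ ≤ 3 * (C * ENNReal.ofReal r * ν (ball x (2 * r))) := by
  have hsplit : μ (ball x r ∩ E) + μ (ball x r \ E) = μ (ball x r) :=
    measure_inter_add_sdiff _ hE
  have hball : μ (ball x r) ≤ 2 * μ (ball x r ∩ E) := by
    have h1 : μ (ball x r \ E) ≤ μ (ball x r ∩ E) := by
      rw [← hsplit, two_mul] at hhalf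
      exact (ENNReal.add_le_add_iff_right (measure_ne_top_of_subset sdiff_subset hfin)).1 hhalf
    rw [← hsplit, two_mul]
    gcongr
  refine ENNReal.le_of_forall_pos_le_add fun ε hε _ => ?_
  obtain ⟨c, hc⟩ := hw x r hr (ε / 3) (by simpa using hε.ne')
  have hcE : ‖c‖ₑ * μ (ball x r ∩ E) ≤ ∫⁻ y in ball x r, ‖w y - c‖ₑ ∂μ := by
    calc ‖c‖ₑ * μ (ball x r ∩ E) = ∫⁻ y in ball x r ∩ E, ‖w y - c‖ₑ ∂μ := by
          rw [← setLIntegral_const]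
          refine setLIntegral_congr_fun (measurableSet_ball.inter hE) fun y hy => ?_
          simp [hE0 y hy.2]
      _ ≤ _ := lintegral_mono_set inter_subset_left
  calc ∫⁻ y in ball x r, ‖w y‖ₑ ∂μ ≤ ∫⁻ y in ball x r, (‖w y - c‖ₑ + ‖c‖ₑ) ∂μ := by
        refine lintegral_mono fun y => ?_
        refine le_trans (le_of_eq ?_) (enorm_add_le _ _)
        congr 1; ring
    _ = (∫⁻ y in ball x r, ‖w y - c‖ₑ ∂μ) + ‖c‖ₑ * μ (ball x r) := by
        rw [lintegral_add_right _ measurable_const, setLIntegral_const]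
    _ ≤ (∫⁻ y in ball x r, ‖w y - c‖ₑ ∂μ) + 2 * ∫⁻ y in ball x r, ‖w y - c‖ₑ ∂μ := by
        refine add_le_add le_rfl ?_
        calc ‖c‖ₑ * μ (ball x r) ≤ ‖c‖ₑ * (2 * μ (ball x r ∩ E)) := by gcongr
          _ = 2 * (‖c‖ₑ * μ (ball x r ∩ E)) := by ring
          _ ≤ _ := mul_le_mul' le_rfl hcE
    _ = 3 * ∫⁻ y in ball x r, ‖w y - c‖ₑ ∂μ := by ring
    _ ≤ 3 * (C * ENNReal.ofReal r * ν (ball x (2 * r)) + ε / 3) := by gcongr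
    _ = _ := by rw [mul_add, ENNReal.mul_div_cancel (by simp) (by simp)]

end LimitMeasure

section Mollification

lemma abs_integral_mul_le {X : Type u} [MeasurableSpace X] {μ : Measure X} {B : Set X} {φ f : X → ℝ} {M : ℝ}
    (hφ : ∀ y, |φ y| ≤ M) (hφ0 : ∀ y ∉ B, φ y = 0) (hf : IntegrableOn f B μ) :
    |∫ y, φ y * f y ∂μ| ≤ M * ∫ y in B, |f y| ∂μ := by
  rw [← setIntegral_eq_integral_of_forall_compl_eq_zero (s := B)
    fun y hy => by rw [hφ0 y hy, zero_mul], ← integral_const_mul, ← Real.norm_eq_abs]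
  refine norm_integral_le_of_norm_le (hf.abs.const_mul M) (Eventually.of_forall fun y => ?_)
  rw [Real.norm_eq_abs, abs_mul]
  exact mul_le_mul_of_nonneg_right (hφ y) (abs_nonneg _)

variable {X : Type u} [MetricSpace X]

/-- The cone of height and radius `2 ρ x` centred at `x`. -/
def mollKernel (ρ : X → ℝ) (x y : X) : ℝ := max 0 (2 * ρ x - dist x y)

lemma continuous_mollKernel (ρ : X → ℝ) (x : X) : Continuous (mollKernel ρ x) := by
  unfold mollKernel
  fun_prop

lemma mollKernel_eq_zero {ρ : X → ℝ} {x y : X} (h : 2 * ρ x ≤ dist x y) : mollKernel ρ x y = 0 :=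
  max_eq_left (by linarith)

lemma mollKernel_nonneg (ρ : X → ℝ) (x y : X) : 0 ≤ mollKernel ρ x y := le_max_left _ _

lemma abs_mollKernel_le {ρ : X → ℝ} {x : X} (hx : 0 < ρ x) (y : X) :
    |mollKernel ρ x y| ≤ 2 * ρ x := by
  rw [abs_of_nonneg (mollKernel_nonneg ρ x y)]
  exact max_le (by positivity) (by linarith [dist_nonneg (x := x) (y := y)])

lemma abs_mollKernel_sub_le {ρ : X → ℝ} (hρ : IsScale ρ) (x x' y : X) :
    |mollKernel ρ x y - mollKernel ρ x' y| ≤ 2 * dist x x' := by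
  have h1 := abs_le.1 (hρ x x')
  have h2 := dist_triangle x x' y
  have h3 := dist_triangle x' x y
  have h4 := dist_nonneg (x := x) (y := x')
  rw [dist_comm x' x] at h3
  unfold mollKernel
  rw [max_comm, max_comm 0]
  exact (abs_max_sub_max_le_abs _ _ _).trans (abs_le.2 ⟨by linarith, by linarith⟩)

variable [MeasurableSpace X]

/-- The average of `w` at the scale `ρ`, weighted by `mollKernel`. -/
def moll (μ : Measure X) (ρ w : X → ℝ) (x : X) : ℝ :=
  (∫ y, mollKernel ρ x y * w y ∂μ) / ∫ y, mollKernel ρ x y ∂μ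

variable [ProperSpace X] {μ : Measure X} {ρ w : X → ℝ}

lemma ofReal_setIntegral_abs_sub [IsLocallyFiniteMeasure μ] (hw : LocallyIntegrable w μ) (x : X) (r c : ℝ) :
    ENNReal.ofReal (∫ y in ball x r, |w y - c| ∂μ) = ∫⁻ y in ball x r, ‖w y - c‖ₑ ∂μ :=
  ofReal_integral_norm_eq_lintegral_enorm
    (((hw.sub (locallyIntegrable_const c)).integrableOn_isCompact
      (isCompact_closedBall x r)).mono_set ball_subset_closedBall)

variable [BorelSpace X]

lemma integrable_mollKernel_mul (hw : LocallyIntegrable w μ) (x : X) :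
    Integrable (fun y => mollKernel ρ x y * w y) μ :=
  hw.integrable_smul_left_of_hasCompactSupport (continuous_mollKernel ρ x)
    (HasCompactSupport.intro (isCompact_closedBall x (2 * ρ x)) fun y hy => by
      rw [mem_closedBall, dist_comm, not_le] at hy
      exact mollKernel_eq_zero hy.le)

variable [IsLocallyFiniteMeasure μ]

lemma integrable_mollKernel (x : X) : Integrable (mollKernel ρ x) μ := by
  simpa using integrable_mollKernel_mul (ρ := ρ) (locallyIntegrable_const (1 : ℝ)) x

lemma le_integral_mollKernel (hρ : IsScale ρ) {x x' : X} (hx : 0 < ρ x)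
    (hxx' : dist x x' ≤ ρ x / 4) :
    ρ x * μ.real (ball x (ρ x)) / 2 ≤ ∫ y, mollKernel ρ x' y ∂μ := by
  calc ρ x * μ.real (ball x (ρ x)) / 2 = ∫ _ in ball x (ρ x), ρ x / 2 ∂μ := by
        rw [setIntegral_const, smul_eq_mul]; ring
    _ ≤ ∫ y in ball x (ρ x), mollKernel ρ x' y ∂μ := by
        refine setIntegral_mono_on (by simp [integrableOn_const_iff, measure_ball_lt_top])
          (integrable_mollKernel x').integrableOn measurableSet_ball fun y hy => ?_
        rw [mem_ball, dist_comm] at hy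
        have h1 := abs_le.1 (hρ x x')
        have h3 := dist_triangle x' x y
        rw [dist_comm x' x] at h3
        exact le_max_of_le_right (by linarith)
    _ ≤ _ := setIntegral_le_integral (integrable_mollKernel x')
        (Eventually.of_forall fun y => mollKernel_nonneg ρ x' y)

lemma moll_sub_const (hw : LocallyIntegrable w μ) {x : X} (h0 : 0 < ∫ y, mollKernel ρ x y ∂μ)
    (c : ℝ) : moll μ ρ w x - c =
      (∫ y, mollKernel ρ x y * (w y - c) ∂μ) / ∫ y, mollKernel ρ x y ∂μ := by
  rw [moll, div_sub' h0.ne']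
  congr 1
  simp only [mul_sub]
  rw [integral_sub (integrable_mollKernel_mul hw x) ((integrable_mollKernel x).mul_const c),
    integral_mul_const]

variable {Cd : ℝ≥0}

lemma abs_moll_sub_const_le (hd : IsDoublingWith μ Cd) (hρ : IsScale ρ)
    (hw : LocallyIntegrable w μ) {x : X} (hx : 0 < ρ x) (c : ℝ) :
    |moll μ ρ w x - c| ≤
      4 * (∫ y in ball x (2 * ρ x), |w y - c| ∂μ) / μ.real (ball x (ρ x)) := by
  have hV : 0 < μ.real (ball x (ρ x)) :=
    ENNReal.toReal_pos (hd.measure_ball_pos x hx).ne' (hd.measure_ball_lt_top x _).ne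
  have hN := le_integral_mollKernel (μ := μ) hρ hx (x' := x) (by simp; positivity)
  have hN0 : 0 < ρ x * μ.real (ball x (ρ x)) / 2 := by positivity
  have hI : IntegrableOn (fun y => w y - c) (ball x (2 * ρ x)) μ :=
    ((hw.sub (locallyIntegrable_const c)).integrableOn_isCompact
      (isCompact_closedBall x (2 * ρ x))).mono_set ball_subset_closedBall
  rw [moll_sub_const hw (hN0.trans_le hN), abs_div, abs_of_pos (hN0.trans_le hN)]
  have h1 : |∫ y, mollKernel ρ x y * (w y - c) ∂μ| ≤ _ :=
    abs_integral_mul_le (abs_mollKernel_le hx) (fun y hy =>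
      mollKernel_eq_zero (by rwa [mem_ball, dist_comm, not_lt] at hy)) hI
  calc _ ≤ 2 * ρ x * (∫ y in ball x (2 * ρ x), |w y - c| ∂μ) /
        (ρ x * μ.real (ball x (ρ x)) / 2) := by gcongr
    _ = _ := by field_simp; ring

lemma abs_moll_sub_le (hd : IsDoublingWith μ Cd) (hCd : 1 ≤ Cd) (hρ : IsScale ρ)
    (hw : LocallyIntegrable w μ) {x x' : X} (hx : 0 < ρ x) (hxx' : dist x x' ≤ ρ x / 4) (c : ℝ) :
    |moll μ ρ w x - moll μ ρ w x'| ≤ 20 * Cd ^ 2 * (∫ y in ball x (4 * ρ x), |w y - c| ∂μ) /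
      (ρ x * μ.real (ball x (ρ x))) * dist x x' := by
  set B := ball x (4 * ρ x)
  set V := μ.real (ball x (ρ x))
  set A := ∫ y in B, |w y - c| ∂μ
  set N := ∫ y, mollKernel ρ x y ∂μ
  set N' := ∫ y, mollKernel ρ x' y ∂μ
  have hV : 0 < V :=
    ENNReal.toReal_pos (hd.measure_ball_pos x hx).ne' (hd.measure_ball_lt_top x _).ne
  have hA : 0 ≤ A := integral_nonneg fun y => abs_nonneg _
  have hN : ρ x * V / 2 ≤ N := le_integral_mollKernel hρ hx (by simp; positivity)
  have hN' : ρ x * V / 2 ≤ N' := le_integral_mollKernel hρ hx hxx'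
  have hN0 : 0 < ρ x * V / 2 := by positivity
  have hB : μ.real B ≤ Cd ^ 2 * V := by
    have h := hd.measure_ball_le (x := x) (y := x) (R := 4 * ρ x) 2 hx (by simp; linarith)
    have h' := ENNReal.toReal_mono (ENNReal.mul_ne_top (by simp)
      (hd.measure_ball_lt_top x _).ne) h
    simpa [Measure.real, V, B] using h'
  have hI : IntegrableOn (fun y => w y - c) B μ :=
    ((hw.sub (locallyIntegrable_const c)).integrableOn_isCompact
      (isCompact_closedBall x (4 * ρ x))).mono_set ball_subset_closedBall
  have hI1 : IntegrableOn (fun _ => (1 : ℝ)) B μ := by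
    simp [integrableOn_const_iff, B, measure_ball_lt_top]
  have hK0 : ∀ y ∉ B, mollKernel ρ x y = 0 := fun y hy =>
    mollKernel_eq_zero (by simp only [B, mem_ball, dist_comm, not_lt] at hy; linarith)
  have hK0' : ∀ y ∉ B, mollKernel ρ x' y = 0 := fun y hy => by
    simp only [B, mem_ball, not_lt] at hy
    have h1 := abs_le.1 (hρ x x')
    have h2 := dist_triangle x x' y
    rw [dist_comm y x] at hy
    exact mollKernel_eq_zero (by linarith)
  have hD0 : ∀ y ∉ B, mollKernel ρ x y - mollKernel ρ x' y = 0 := fun y hy => by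
    rw [hK0 y hy, hK0' y hy, sub_zero]
  have hwc : LocallyIntegrable (fun y => w y - c) μ := hw.sub (locallyIntegrable_const c)
  have e1 := abs_integral_mul_le (abs_mollKernel_le hx) hK0 hI
  have e2 := abs_integral_mul_le (abs_mollKernel_sub_le hρ x x') hD0 hI
  have e3 := abs_integral_mul_le (abs_mollKernel_sub_le hρ x x') hD0 hI1
  simp only [mul_one, abs_one, setIntegral_const, smul_eq_mul] at e3
  simp only [sub_mul] at e2
  rw [integral_sub (integrable_mollKernel x) (integrable_mollKernel x')] at e3
  rw [integral_sub (integrable_mollKernel_mul hwc x) (integrable_mollKernel_mul hwc x')] at e2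
  rw [← sub_sub_sub_cancel_right _ _ c, moll_sub_const hw (hN0.trans_le hN),
    moll_sub_const hw (hN0.trans_le hN')]
  set I := ∫ y, mollKernel ρ x y * (w y - c) ∂μ
  set I' := ∫ y, mollKernel ρ x' y * (w y - c) ∂μ
  have hNp : 0 < N := hN0.trans_le hN
  have hNp' : 0 < N' := hN0.trans_le hN'
  have hid : I / N - I' / N' = (I - I') / N' - I * (N - N') / (N * N') := by
    field_simp; ring
  have ht := dist_nonneg (x := x) (y := x')
  have hC1 : (1 : ℝ) ≤ Cd ^ 2 := one_le_pow₀ (by exact_mod_cast hCd)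
  calc |I / N - I' / N'| ≤ |I - I'| / N' + |I| * |N - N'| / (N * N') := by
        rw [hid]
        refine (abs_sub _ _).trans_eq ?_
        rw [abs_div, abs_div, abs_mul, abs_of_pos hNp', abs_of_pos (mul_pos hNp hNp')]
    _ ≤ 2 * dist x x' * A / (ρ x * V / 2) +
        2 * ρ x * A * (2 * dist x x' * (Cd ^ 2 * V)) / (ρ x * V / 2 * (ρ x * V / 2)) := by
        gcongr
        exact e3.trans (by gcongr)
    _ = (4 + 16 * Cd ^ 2) * A / (ρ x * V) * dist x x' := by
        field_simp; ring
    _ ≤ _ := by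
        gcongr
        linarith

lemma enorm_moll_sub_const_le (hd : IsDoublingWith μ Cd) (hρ : IsScale ρ)
    (hw : LocallyIntegrable w μ) {x : X} (hx : 0 < ρ x) (c : ℝ) :
    ‖moll μ ρ w x - c‖ₑ ≤
      4 * (∫⁻ y in ball x (2 * ρ x), ‖w y - c‖ₑ ∂μ) / μ (ball x (ρ x)) := by
  have hV : 0 < μ.real (ball x (ρ x)) :=
    ENNReal.toReal_pos (hd.measure_ball_pos x hx).ne' (hd.measure_ball_lt_top x _).ne
  rw [Real.enorm_eq_ofReal_abs]
  refine (ENNReal.ofReal_le_ofReal (abs_moll_sub_const_le hd hρ hw hx c)).trans_eq ?_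
  rw [ENNReal.ofReal_div_of_pos hV, ENNReal.ofReal_mul (by norm_num),
    ofReal_setIntegral_abs_sub hw, ofReal_measureReal (hd.measure_ball_lt_top x _).ne]
  norm_num

lemma ofReal_abs_moll_sub_le_setLIntegral (hd : IsDoublingWith μ Cd) (hCd : 1 ≤ Cd) (hρ : IsScale ρ)
    (hw : LocallyIntegrable w μ) {x x' : X} (hx : 0 < ρ x) (hxx' : dist x x' ≤ ρ x / 4) (c : ℝ) :
    ENNReal.ofReal |moll μ ρ w x' - moll μ ρ w x| ≤
      20 * (Cd : ℝ≥0∞) ^ 2 * ((∫⁻ y in ball x (4 * ρ x), ‖w y - c‖ₑ ∂μ) /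
        (ENNReal.ofReal (ρ x) * μ (ball x (ρ x)))) * ENNReal.ofReal (dist x' x) := by
  have hV : 0 < μ.real (ball x (ρ x)) :=
    ENNReal.toReal_pos (hd.measure_ball_pos x hx).ne' (hd.measure_ball_lt_top x _).ne
  rw [abs_sub_comm, dist_comm]
  refine (ENNReal.ofReal_le_ofReal (abs_moll_sub_le hd hCd hρ hw hx hxx' c)).trans_eq ?_
  rw [ENNReal.ofReal_mul (by positivity), mul_div_assoc, ENNReal.ofReal_mul (by positivity),
    ENNReal.ofReal_div_of_pos (by positivity), ofReal_setIntegral_abs_sub hw,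
    ENNReal.ofReal_mul hx.le, ofReal_measureReal (hd.measure_ball_lt_top x _).ne,
    ENNReal.ofReal_mul (by norm_num), ENNReal.ofReal_pow (by positivity)]
  norm_num

lemma locallyLipschitzOnSet_moll (hd : IsDoublingWith μ Cd) (hCd : 1 ≤ Cd) (hρ : IsScale ρ)
    (hw : LocallyIntegrable w μ) {U : Set X} (hpos : ∀ x ∈ U, 0 < ρ x) :
    LocallyLipschitzOnSet (moll μ ρ w) U := by
  intro K hKc hKb hKU
  refine LocallyLipschitzOn.exists_lipschitzOnWith_of_compact
    (Metric.isCompact_of_isClosed_isBounded hKc hKb) fun x hx => ?_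
  have hx0 := hpos x (hKU hx)
  have hV : 0 < μ.real (ball x (ρ x / 2)) :=
    ENNReal.toReal_pos (hd.measure_ball_pos x (by positivity)).ne' (hd.measure_ball_lt_top x _).ne
  have hI : ∀ r, IntegrableOn w (closedBall x r) μ := fun r =>
    hw.integrableOn_isCompact (isCompact_closedBall x r)
  refine ⟨Real.toNNReal (20 * Cd ^ 2 * (∫ y in closedBall x (8 * ρ x), |w y| ∂μ) /
    (ρ x / 2 * μ.real (ball x (ρ x / 2)))), ball x (ρ x / 16),
    mem_nhdsWithin_of_mem_nhds (ball_mem_nhds x (by positivity)),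
    LipschitzOnWith.of_dist_le_mul fun y hy z hz => ?_⟩
  rw [mem_ball] at hy hz
  have h1 := abs_le.1 (hρ y x)
  have h2 := dist_triangle_right y z x
  have h := abs_moll_sub_le hd hCd hρ hw (x := y) (x' := z) (by linarith) (by linarith) 0
  simp only [sub_zero] at h
  rw [Real.dist_eq, Real.coe_toNNReal _ (by positivity)]
  have hA : ∫ y' in ball y (4 * ρ y), |w y'| ∂μ ≤ ∫ y' in closedBall x (8 * ρ x), |w y'| ∂μ :=
    setIntegral_mono_set (hI _).abs (Eventually.of_forall fun _ => abs_nonneg _)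
      (LE.le.eventuallyLE (ball_subset_closedBall.trans
        (closedBall_subset_closedBall' (by linarith))))
  have hV' : μ.real (ball x (ρ x / 2)) ≤ μ.real (ball y (ρ y)) :=
    measureReal_mono (ball_subset_ball' (by rw [dist_comm]; linarith))
      (hd.measure_ball_lt_top _ _).ne
  have hρy : ρ x / 2 ≤ ρ y := by linarith
  have hρy0 : 0 < ρ y := by linarith
  exact h.trans (by gcongr)

variable [SecondCountableTopology X] [SFinite μ]

lemma tendstoL1loc_moll (hd : IsDoublingWith μ Cd) {ρ : ℕ → X → ℝ} (hρ : ∀ i, IsScale (ρ i))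
    (hw : LocallyIntegrable w μ) {U : Set X} (hpos : ∀ i, ∀ x ∈ U, 0 < ρ i x) {δ : ℕ → ℝ}
    (hδ : Tendsto δ atTop (𝓝 0)) (hρδ : ∀ i x, ρ i x ≤ δ i) :
    TendstoL1loc μ (fun i => moll μ (ρ i) w) w U := by
  intro K hKc hKb hKU
  have hK : IsCompact K := Metric.isCompact_of_isClosed_isBounded hKc hKb
  set K' := cthickening 1 K
  have hK' : IsCompact K' := hK.cthickening
  rw [ENNReal.tendsto_nhds_zero]
  intro ε hε
  obtain ⟨ε₁, hε₁, hε₁'⟩ := ENNReal.exists_nnreal_pos_mul_lt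
    (a := 4 * (Cd : ℝ≥0∞) ^ 5 + 1) (b := ε / 2)
    (by simp [ENNReal.mul_eq_top]) (by simpa using hε.ne')
  obtain ⟨ε₂, hε₂, hε₂'⟩ := ENNReal.exists_nnreal_pos_mul_lt
    (a := 4 * (Cd : ℝ≥0∞) * μ K) (b := ε / 2)
    (by simp [ENNReal.mul_eq_top, hK.measure_lt_top.ne]) (by simpa using hε.ne')
  obtain ⟨g, hgs, hgε, hgc, -⟩ := ((hw.integrableOn_isCompact hK').integrable_indicator
    hK'.measurableSet).exists_hasCompactSupport_lintegral_sub_le (ε := ε₁) (by simpa using hε₁.ne')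
  have hgu := Metric.uniformContinuous_iff.1 (hgs.uniformContinuous_of_continuous hgc) ε₂
    (by exact_mod_cast hε₂)
  obtain ⟨s, hs, hgs'⟩ := hgu
  set l : X → ℝ≥0∞ := fun y => ‖w y - g y‖ₑ
  have hlm : AEMeasurable l μ :=
    (hw.aestronglyMeasurable.sub hgc.aestronglyMeasurable).enorm
  have hlε : μ.withDensity l K' ≤ ε₁ := by
    rw [withDensity_apply _ hK'.measurableSet]
    refine le_trans (le_of_eq ?_) ((setLIntegral_le_lintegral K' _).trans hgε)
    refine setLIntegral_congr_fun hK'.measurableSet fun y hy => ?_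
    simp [l, indicator_of_mem hy]
  have hlK : ∫⁻ y in K, l y ∂μ ≤ ε₁ := by
    rw [← withDensity_apply _ hKc.measurableSet]
    exact (measure_mono (self_subset_cthickening K)).trans hlε
  filter_upwards [hδ.eventually_lt_const (show 0 < min (1 / 8) (s / 2) by positivity)] with i hi
  rw [lt_min_iff] at hi
  have hpt : ∀ x ∈ K, ENNReal.ofReal |moll μ (ρ i) w x - w x| ≤
      4 * (μ.withDensity l (ball x (8 * ρ i x)) / μ (ball x (ρ i x))) +
        (4 * (Cd : ℝ≥0∞) * ε₂ + l x) := by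
    intro x hx
    have hx0 := hpos i x (hKU hx)
    have hxδ := hρδ i x
    have hV := hd.measure_ball_pos x hx0
    have hV' := hd.measure_ball_lt_top x (ρ i x)
    rw [← Real.enorm_eq_ofReal_abs, ← sub_add_sub_cancel _ (g x), ← add_assoc]
    refine (enorm_add_le _ _).trans (add_le_add ((enorm_moll_sub_const_le hd (hρ i) hw hx0 _).trans
      ?_) (le_of_eq (by simp only [l]; rw [← enorm_neg, neg_sub])))
    have e1 : ∫⁻ y in ball x (2 * ρ i x), ‖w y - g x‖ₑ ∂μ ≤
        μ.withDensity l (ball x (8 * ρ i x)) + ε₂ * (Cd * μ (ball x (ρ i x))) := by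
      calc _ ≤ ∫⁻ y in ball x (2 * ρ i x), (l y + ε₂) ∂μ := by
            refine setLIntegral_mono' measurableSet_ball fun y hy => ?_
            rw [mem_ball] at hy
            rw [← sub_add_sub_cancel _ (g y)]
            refine (enorm_add_le _ _).trans (add_le_add le_rfl ?_)
            have := hgs' (a := y) (b := x) (by linarith)
            rw [← edist_eq_enorm_sub, edist_dist]
            exact ENNReal.ofReal_le_of_le_toReal (by simpa using this.le)
        _ = μ.withDensity l (ball x (2 * ρ i x)) + ε₂ * μ (ball x (2 * ρ i x)) := by
            rw [lintegral_add_right _ measurable_const, setLIntegral_const,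
              withDensity_apply _ measurableSet_ball]
        _ ≤ _ := by
            gcongr
            · norm_num
            · exact (hd x _ hx0).2.1
    calc _ ≤ 4 * (μ.withDensity l (ball x (8 * ρ i x)) + ε₂ * (Cd * μ (ball x (ρ i x)))) /
          μ (ball x (ρ i x)) := by gcongr
      _ = 4 * (μ.withDensity l (ball x (8 * ρ i x)) / μ (ball x (ρ i x))) +
          4 * Cd * ε₂ * (μ (ball x (ρ i x)) / μ (ball x (ρ i x))) := by
          simp only [div_eq_mul_inv]; ring
      _ = _ := by rw [ENNReal.div_self hV.ne' hV'.ne, mul_one]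
  calc ∫⁻ x in K, ENNReal.ofReal |moll μ (ρ i) w x - w x| ∂μ
      ≤ ∫⁻ x in K, (4 * (μ.withDensity l (ball x (8 * ρ i x)) / μ (ball x (ρ i x))) +
        (4 * (Cd : ℝ≥0∞) * ε₂ + l x)) ∂μ := setLIntegral_mono' hKc.measurableSet hpt
    _ = 4 * (∫⁻ x in K, μ.withDensity l (ball x (8 * ρ i x)) / μ (ball x (ρ i x)) ∂μ) +
        (4 * (Cd : ℝ≥0∞) * ε₂ * μ K + ∫⁻ x in K, l x ∂μ) := by
        rw [lintegral_add_right' _ (hlm.const_add _).restrict, lintegral_const_mul' _ _ (by simp),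
          lintegral_add_left' aemeasurable_const, setLIntegral_const]
    _ ≤ 4 * ((Cd : ℝ≥0∞) ^ 5 * ε₁) + (4 * (Cd : ℝ≥0∞) * ε₂ * μ K + ε₁) := by
        gcongr
        refine (lintegral_measure_ball_div_le hd (hρ i) _ hKc.measurableSet
          (fun x hx => hpos i x (hKU hx)) hK'.measurableSet fun x hx => ?_).trans
          (mul_le_mul' le_rfl hlε)
        refine (ball_subset_ball ?_).trans ((ball_subset_thickening hx 1).trans
          (thickening_subset_cthickening 1 K))
        linarith [hρδ i x]
    _ = ε₁ * (4 * (Cd : ℝ≥0∞) ^ 5 + 1) + ε₂ * (4 * (Cd : ℝ≥0∞) * μ K) := by ring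
    _ ≤ ε / 2 + ε / 2 := add_le_add hε₁'.le hε₂'.le
    _ = ε := ENNReal.add_halves ε

end Mollification

section SlopeBound

variable {X : Type u} [MetricSpace X] {ρ w : X → ℝ}

lemma IsScale.const_mul (hρ : IsScale ρ) {η : ℝ} (hη : 0 < η) (hη1 : η ≤ 1) :
    IsScale fun x => η * ρ x := fun x y => by
  rw [← mul_sub, abs_mul, abs_of_pos hη]
  exact (mul_le_of_le_one_left (abs_nonneg _) hη1).trans (hρ x y)

lemma isOpen_setOf_exists_dist_lt (hρ : Continuous ρ) {U : Set X} (hU : IsOpen U) (G : Set X)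
    (a : ℝ) : IsOpen {x | x ∈ U ∧ ∃ e ∈ G, dist x e < a * ρ x} := by
  have : {x | x ∈ U ∧ ∃ e ∈ G, dist x e < a * ρ x} =
      U ∩ ⋃ e ∈ G, {x | dist x e < a * ρ x} := by ext x; simp
  rw [this]
  exact hU.inter (isOpen_biUnion fun e _ => isOpen_lt (by fun_prop) (by fun_prop))

variable [MeasurableSpace X] [BorelSpace X] [ProperSpace X] {μ : Measure X}
  [IsLocallyFiniteMeasure μ] {Cd : ℝ≥0}

lemma HasPoincareBound.ofReal_abs_moll_sub_le {ν : Measure X} {C : ℝ≥0∞}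
    (hwν : HasPoincareBound μ ν C w) (hd : IsDoublingWith μ Cd) (hCd : 1 ≤ Cd) (hρ : IsScale ρ)
    (hw : LocallyIntegrable w μ) {x x' : X} (hx : 0 < ρ x) (hxx' : dist x x' ≤ ρ x / 4) :
    ENNReal.ofReal |moll μ ρ w x' - moll μ ρ w x| ≤
      80 * (Cd : ℝ≥0∞) ^ 2 * C * (ν (ball x (8 * ρ x)) / μ (ball x (ρ x))) *
        ENNReal.ofReal (dist x' x) := by
  have hV := hd.measure_ball_pos x hx
  have hρ0 : ENNReal.ofReal (ρ x) ≠ 0 := by simpa using hx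
  set K : ℝ≥0∞ := 20 * (Cd : ℝ≥0∞) ^ 2 * (ENNReal.ofReal (ρ x) * μ (ball x (ρ x)))⁻¹ *
    ENNReal.ofReal (dist x' x)
  have hK : K ≠ ∞ := by
    simp only [K]
    refine ENNReal.mul_ne_top (ENNReal.mul_ne_top (by simp [ENNReal.mul_eq_top])
      (ENNReal.inv_ne_top.2 (mul_ne_zero hρ0 hV.ne'))) (by simp)
  refine ENNReal.le_of_forall_pos_le_add fun ε hε _ => ?_
  obtain ⟨ε', hε', hle⟩ := ENNReal.exists_nnreal_pos_mul_lt (a := K) (b := ε) hK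
    (by simpa using hε.ne')
  obtain ⟨c, hc⟩ := hwν x (4 * ρ x) (by positivity) ε' (by simpa using hε'.ne')
  calc _ ≤ 20 * (Cd : ℝ≥0∞) ^ 2 * ((∫⁻ y in ball x (4 * ρ x), ‖w y - c‖ₑ ∂μ) /
        (ENNReal.ofReal (ρ x) * μ (ball x (ρ x)))) * ENNReal.ofReal (dist x' x) :=
        ofReal_abs_moll_sub_le_setLIntegral hd hCd hρ hw hx hxx' c
    _ ≤ 20 * (Cd : ℝ≥0∞) ^ 2 * ((C * ENNReal.ofReal (4 * ρ x) * ν (ball x (8 * ρ x)) + ε') /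
        (ENNReal.ofReal (ρ x) * μ (ball x (ρ x)))) * ENNReal.ofReal (dist x' x) := by
        gcongr
        refine hc.trans_eq ?_
        rw [show 2 * (4 * ρ x) = 8 * ρ x by ring]
    _ = 80 * (Cd : ℝ≥0∞) ^ 2 * C * (ν (ball x (8 * ρ x)) / μ (ball x (ρ x))) *
        ENNReal.ofReal (dist x' x) * ((ENNReal.ofReal (ρ x))⁻¹ * ENNReal.ofReal (ρ x)) +
        ε' * K := by
        simp only [K, div_eq_mul_inv]
        rw [ENNReal.mul_inv (.inl hρ0) (.inl (by simp)), ENNReal.ofReal_mul (by norm_num),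
          ENNReal.ofReal_ofNat]
        ring
    _ ≤ _ := by
        rw [ENNReal.inv_mul_cancel hρ0 (by simp), mul_one]
        exact add_le_add le_rfl hle.le

variable [SecondCountableTopology X] [SFinite μ]

/-- If `w` vanishes on at least half of each ball of radius `2 η ρ` that is close to `G`, then the
slope of the mollification of `w` has small integral, provided that `G` almost fills `U`. -/
lemma HasPoincareBound.exists_slope_moll {ν : Measure X} [IsFiniteMeasure ν] {C : ℝ≥0∞}
    (hwν : HasPoincareBound μ ν C w) (hd : IsDoublingWith μ Cd) (hCd : 1 ≤ Cd) (hρ : IsScale ρ)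
    (hw : LocallyIntegrable w μ) {U : Set X} (hU : IsOpen U) (hpos : ∀ x ∈ U, 0 < ρ x)
    (hsub : ∀ x ∈ U, ball x (8 * ρ x) ⊆ U) {E : Set X} (hE : MeasurableSet E)
    (hE0 : ∀ x ∈ E, w x = 0) (G : Set X) {η : ℝ} (hη : 0 < η) (hη1 : η ≤ 1)
    (hG : ∀ e ∈ G, ∀ z ∈ U, dist z e < 20 * ρ z →
      2 * μ (ball z (2 * (η * ρ z)) \ E) ≤ μ (ball z (2 * (η * ρ z)))) :
    ∃ F : X → ℝ≥0∞, Measurable F ∧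
      (∀ x ∈ U, ∀ x' ∈ ball x (ρ x / 4), ENNReal.ofReal |moll μ ρ w x' - moll μ ρ w x| ≤
        F x * ENNReal.ofReal (dist x' x)) ∧
      ∫⁻ x in U, F x ∂μ ≤ 480 * (Cd : ℝ≥0∞) ^ 14 * C *
        (ν (U \ closure G) + ENNReal.ofReal η * ν univ) := by
  set l : Measure X := μ.withDensity fun y => ‖w y‖ₑ * (ENNReal.ofReal (ρ y))⁻¹
  set A : Set X := {x | x ∈ U ∧ ∃ e ∈ G, dist x e < 8 * ρ x}
  set S₁ : Set X := {x | x ∈ U ∧ ∃ e ∈ G, dist x e < 18 * ρ x}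
  set S₂ : Set X := {x | x ∈ U ∧ ∃ e ∈ G, dist x e < 20 * ρ x}
  have hA : MeasurableSet A := (isOpen_setOf_exists_dist_lt hρ.continuous hU G 8).measurableSet
  have hS₁ : MeasurableSet S₁ := (isOpen_setOf_exists_dist_lt hρ.continuous hU G 18).measurableSet
  have hS₂ : MeasurableSet S₂ := (isOpen_setOf_exists_dist_lt hρ.continuous hU G 20).measurableSet
  have hAU : A ⊆ U := fun x hx => hx.1
  have hσ : IsScale fun x => η * ρ x := hρ.const_mul hη hη1
  have hmeas : ∀ m : Measure X, SFinite m →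
      Measurable fun x => m (ball x (8 * ρ x)) / μ (ball x (ρ x)) := fun m _ =>
    (measurable_measure_ball_scale m hρ.continuous 8).div
      (by simpa using measurable_measure_ball_scale μ hρ.continuous 1)
  have hgood : ∫⁻ x in A, l (ball x (8 * ρ x)) / μ (ball x (ρ x)) ∂μ ≤
      (Cd : ℝ≥0∞) ^ 5 * l S₁ := by
    refine lintegral_measure_ball_div_le hd hρ l hA (fun x hx => hpos x hx.1) hS₁ ?_
    rintro x ⟨hx, e, he, hxe⟩ y hy
    refine ⟨hsub x hx hy, e, he, ?_⟩
    rw [mem_ball] at hy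
    have h1 := abs_le.1 (hρ y x)
    linarith [dist_triangle y x e, hpos x hx]
  have hbad : ∫⁻ x in U \ A, ν (ball x (8 * ρ x)) / μ (ball x (ρ x)) ∂μ ≤
      (Cd : ℝ≥0∞) ^ 5 * ν (U \ closure G) := by
    refine lintegral_measure_ball_div_le hd hρ ν (hU.measurableSet.diff hA)
      (fun x hx => hpos x hx.1) (hU.measurableSet.diff isClosed_closure.measurableSet) ?_
    rintro x ⟨hx, hxA⟩
    refine subset_sdiff.2 ⟨hsub x hx, Disjoint.closure_right ?_ isOpen_ball⟩
    refine Set.disjoint_left.2 fun e hex heG => hxA ⟨hx, e, heG, ?_⟩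
    rwa [mem_ball, dist_comm] at hex
  have hlS₁ : l S₁ ≤ (Cd : ℝ≥0∞) ^ 2 *
      ∫⁻ x in S₂, l (ball x (2 * (η * ρ x))) / μ (ball x (η * ρ x)) ∂μ := by
    refine measure_le_lintegral_measure_ball_div hd hσ l hS₁
      (fun x hx => mul_pos hη (hpos x hx.1)) ?_
    rintro y ⟨hy, e, he, hye⟩ z hz
    rw [mem_ball] at hz
    have hy0 := hpos y hy
    have h0 : η * ρ y ≤ ρ y := mul_le_of_le_one_left hy0.le hη1
    have h1 := abs_le.1 (hρ z y)
    refine ⟨hsub y hy (by rw [mem_ball]; linarith), e, he, ?_⟩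
    linarith [dist_triangle z y e]
  have hlball : ∀ z ∈ S₂, l (ball z (2 * (η * ρ z))) ≤
      12 * C * ENNReal.ofReal η * ν (ball z (8 * (η * ρ z))) := by
    rintro z ⟨hz, e, he, hze⟩
    have hz0 := hpos z hz
    have hρ0 : ENNReal.ofReal (ρ z) ≠ 0 := by simpa using hz0
    have h0 : η * ρ z ≤ ρ z := mul_le_of_le_one_left hz0.le hη1
    calc l (ball z (2 * (η * ρ z)))
        = ∫⁻ y in ball z (2 * (η * ρ z)), ‖w y‖ₑ * (ENNReal.ofReal (ρ y))⁻¹ ∂μ :=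
          withDensity_apply _ measurableSet_ball
      _ ≤ ∫⁻ y in ball z (2 * (η * ρ z)), ‖w y‖ₑ * (2 * (ENNReal.ofReal (ρ z))⁻¹) ∂μ := by
          refine setLIntegral_mono' measurableSet_ball fun y hy => ?_
          rw [mem_ball] at hy
          have h1 := abs_le.1 (hρ y z)
          gcongr
          rw [← ENNReal.inv_le_inv, inv_inv, ENNReal.mul_inv (by simp) (by simp), inv_inv,
            mul_comm, ← div_eq_mul_inv]
          refine ENNReal.div_le_of_le_mul ?_
          rw [← ENNReal.ofReal_ofNat, ← ENNReal.ofReal_mul (by linarith)]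
          exact ENNReal.ofReal_le_ofReal (by linarith)
      _ = (∫⁻ y in ball z (2 * (η * ρ z)), ‖w y‖ₑ ∂μ) * (2 * (ENNReal.ofReal (ρ z))⁻¹) :=
          lintegral_mul_const' _ _ (by simp [ENNReal.mul_eq_top, hz0])
      _ ≤ 3 * (C * ENNReal.ofReal (2 * (η * ρ z)) * ν (ball z (2 * (2 * (η * ρ z))))) *
          (2 * (ENNReal.ofReal (ρ z))⁻¹) := by
          gcongr
          exact hwν.lintegral_enorm_le hE hE0 (by positivity) (hd.measure_ball_lt_top _ _).ne
            (hG e he z hz hze)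
      _ = 12 * C * ENNReal.ofReal η * ν (ball z (2 * (2 * (η * ρ z)))) *
          ((ENNReal.ofReal (ρ z))⁻¹ * ENNReal.ofReal (ρ z)) := by
          rw [ENNReal.ofReal_mul (by norm_num), ENNReal.ofReal_mul hη.le, ENNReal.ofReal_ofNat]
          ring
      _ ≤ 12 * C * ENNReal.ofReal η * ν (ball z (8 * (η * ρ z))) := by
          rw [ENNReal.inv_mul_cancel hρ0 (by simp), mul_one]
          have : 0 < η * ρ z := by positivity
          exact mul_le_mul' le_rfl (measure_mono (ball_subset_ball (by linarith)))
  have hS₂int : ∫⁻ x in S₂, l (ball x (2 * (η * ρ x))) / μ (ball x (η * ρ x)) ∂μ ≤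
      12 * C * ENNReal.ofReal η * ((Cd : ℝ≥0∞) ^ 5 * ν univ) := by
    calc _ ≤ ∫⁻ x in S₂, 12 * C * ENNReal.ofReal η *
          (ν (ball x (8 * (η * ρ x))) / μ (ball x (η * ρ x))) ∂μ := by
          refine setLIntegral_mono' hS₂ fun z hz => ?_
          rw [← mul_div_assoc]
          exact ENNReal.div_le_div_right (hlball z hz) _
      _ = 12 * C * ENNReal.ofReal η *
          ∫⁻ x in S₂, ν (ball x (8 * (η * ρ x))) / μ (ball x (η * ρ x)) ∂μ := by
          refine lintegral_const_mul _ ?_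
          exact (measurable_measure_ball_scale ν hσ.continuous 8).div
            (by simpa using measurable_measure_ball_scale μ hσ.continuous 1)
      _ ≤ _ := by
          gcongr
          exact lintegral_measure_ball_div_le hd hσ ν hS₂ (fun x hx => mul_pos hη (hpos x hx.1))
            MeasurableSet.univ fun x _ => subset_univ _
  classical
  refine ⟨A.piecewise (fun x => 40 * (Cd : ℝ≥0∞) ^ 2 * (l (ball x (8 * ρ x)) / μ (ball x (ρ x))))
    fun x => 80 * (Cd : ℝ≥0∞) ^ 2 * C * (ν (ball x (8 * ρ x)) / μ (ball x (ρ x))),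
    ((hmeas l inferInstance).const_mul _).piecewise hA ((hmeas ν inferInstance).const_mul _),
    fun x hx x' hx' => ?_, ?_⟩
  · have hx0 := hpos x hx
    have hρ0 : ENNReal.ofReal (ρ x) ≠ 0 := by simpa using hx0
    rw [mem_ball, dist_comm] at hx'
    by_cases hxA : x ∈ A
    · rw [piecewise_eq_of_mem _ _ _ hxA]
      refine (ofReal_abs_moll_sub_le_setLIntegral hd hCd hρ hw hx0 hx'.le 0).trans ?_
      gcongr ?_ * _
      simp only [sub_zero]
      have hl : (ENNReal.ofReal (ρ x))⁻¹ * ∫⁻ y in ball x (4 * ρ x), ‖w y‖ₑ ∂μ ≤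
          2 * l (ball x (8 * ρ x)) := by
        calc _ = ∫⁻ y in ball x (4 * ρ x), (ENNReal.ofReal (ρ x))⁻¹ * ‖w y‖ₑ ∂μ :=
              (lintegral_const_mul' _ _ (by simpa using hx0)).symm
          _ ≤ ∫⁻ y in ball x (4 * ρ x), 2 * (‖w y‖ₑ * (ENNReal.ofReal (ρ y))⁻¹) ∂μ := by
              refine setLIntegral_mono' measurableSet_ball fun y hy => ?_
              rw [mem_ball] at hy
              have h1 := abs_le.1 (hρ y x)
              rw [mul_left_comm, mul_comm]
              gcongr
              rw [← ENNReal.inv_le_inv, inv_inv, ENNReal.mul_inv (by simp) (by simp), inv_inv,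
                mul_comm, ← div_eq_mul_inv]
              refine ENNReal.div_le_of_le_mul ?_
              rw [← ENNReal.ofReal_ofNat, ← ENNReal.ofReal_mul (by linarith)]
              exact ENNReal.ofReal_le_ofReal (by linarith)
          _ = 2 * l (ball x (4 * ρ x)) := by
              rw [lintegral_const_mul' _ _ (by simp), withDensity_apply _ measurableSet_ball]
          _ ≤ _ := by
              gcongr
              norm_num
      calc _ = 20 * (Cd : ℝ≥0∞) ^ 2 *
            ((ENNReal.ofReal (ρ x))⁻¹ * ∫⁻ y in ball x (4 * ρ x), ‖w y‖ₑ ∂μ) *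
              (μ (ball x (ρ x)))⁻¹ := by
            rw [div_eq_mul_inv, ENNReal.mul_inv (.inl hρ0) (.inl (by simp))]
            ring
        _ ≤ 20 * (Cd : ℝ≥0∞) ^ 2 * (2 * l (ball x (8 * ρ x))) * (μ (ball x (ρ x)))⁻¹ := by
            gcongr
        _ = _ := by rw [div_eq_mul_inv]; ring
    · rw [piecewise_eq_of_notMem _ _ _ hxA]
      exact hwν.ofReal_abs_moll_sub_le hd hCd hρ hw hx0 hx'.le
  · have hC1 : (1 : ℝ≥0∞) ≤ Cd := by exact_mod_cast hCd
    rw [← lintegral_inter_add_sdiff _ U hA, inter_eq_self_of_subset_right hAU,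
      setLIntegral_congr_fun hA (piecewise_eqOn _ _ _),
      setLIntegral_congr_fun (hU.measurableSet.diff hA)
        ((piecewise_eqOn_compl _ _ _).mono fun x hx => hx.2),
      lintegral_const_mul _ (hmeas l inferInstance), lintegral_const_mul _ (hmeas ν inferInstance)]
    calc _ ≤ 40 * (Cd : ℝ≥0∞) ^ 2 * ((Cd : ℝ≥0∞) ^ 5 * ((Cd : ℝ≥0∞) ^ 2 *
          (12 * C * ENNReal.ofReal η * ((Cd : ℝ≥0∞) ^ 5 * ν univ)))) +
          80 * (Cd : ℝ≥0∞) ^ 2 * C * ((Cd : ℝ≥0∞) ^ 5 * ν (U \ closure G)) := by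
          gcongr
          exact hgood.trans (by gcongr; exact hlS₁.trans (by gcongr))
      _ = 480 * (Cd : ℝ≥0∞) ^ 14 * C * (ENNReal.ofReal η * ν univ) +
          80 * (Cd : ℝ≥0∞) ^ 7 * C * ν (U \ closure G) := by ring
      _ ≤ 480 * (Cd : ℝ≥0∞) ^ 14 * C * (ENNReal.ofReal η * ν univ) +
          480 * (Cd : ℝ≥0∞) ^ 14 * C * ν (U \ closure G) := by
          gcongr <;> norm_num
      _ = _ := by ring

end SlopeBound

lemma ennreal_liminf_add_const {ι : Type*} (l : Filter ι) [l.NeBot] (f : ι → ℝ≥0∞) (c : ℝ≥0∞) :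
    liminf (fun i => f i + c) l = liminf f l + c :=
  _root_.liminf_add_const l f c (by isBoundedDefault) (by isBoundedDefault)

section Slope

variable {X : Type u} [MetricSpace X]

lemma isScale_min_infDist (δ : ℝ) (S : Set X) : IsScale fun x => min δ (infDist x S) / 100 := by
  intro x y
  rw [← sub_div, abs_div, abs_of_pos (by norm_num : (0 : ℝ) < 100)]
  gcongr
  have h1 := infDist_le_infDist_add_dist (s := S) (x := x) (y := y)
  have h2 := infDist_le_infDist_add_dist (s := S) (x := y) (y := x)
  rw [dist_comm] at h2
  refine (abs_min_sub_min_le_max _ _ _ _).trans (max_le (by simp) (abs_le.2 ⟨?_, ?_⟩)) <;> linarith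

lemma eventually_oscQuot_le_of_slope {f : X → ℝ} {x : X} {F : ℝ≥0∞} {s : ℝ} (hs : 0 < s)
    (h : ∀ y ∈ ball x s, ENNReal.ofReal |f y - f x| ≤ F * ENNReal.ofReal (dist y x)) :
    ∀ᶠ r in 𝓝[>] (0 : ℝ), oscQuot f r x ≤ F := by
  filter_upwards [Ioo_mem_nhdsGT hs] with r hr using oscQuot_le_of_lipschitz hr.1 hr.2.le h

lemma lipConst_add_le {f g : X → ℝ} {x : X} {F : ℝ≥0∞} {s : ℝ} (hs : 0 < s)
    (h : ∀ y ∈ ball x s, ENNReal.ofReal |g y - g x| ≤ F * ENNReal.ofReal (dist y x)) :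
    lipConst (fun y => f y + g y) x ≤ lipConst f x + F := by
  have hadd : ∀ r > 0, oscQuot (fun y => f y + g y) r x ≤ oscQuot f r x + oscQuot g r x := by
    intro r hr
    refine iSup₂_le fun y hy => ?_
    refine le_trans ?_ (add_le_add (le_iSup₂ (f := fun y _ =>
      ENNReal.ofReal (|f y - f x| / r)) y hy) (le_iSup₂ (f := fun y _ =>
      ENNReal.ofReal (|g y - g x| / r)) y hy))
    rw [← ENNReal.ofReal_add (by positivity) (by positivity), ← add_div, add_sub_add_comm]
    gcongr
    exact abs_add_le _ _
  rw [lipConst_eq, lipConst_eq, ← ennreal_liminf_add_const]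
  refine liminf_le_liminf ?_
  filter_upwards [eventually_oscQuot_le_of_slope hs h, self_mem_nhdsWithin] with r hr hr0
  exact (hadd r hr0).trans (by gcongr)

lemma LocallyLipschitzOnSet.add {f g : X → ℝ} {W : Set X} (hf : LocallyLipschitzOnSet f W)
    (hg : LocallyLipschitzOnSet g W) : LocallyLipschitzOnSet (fun x => f x + g x) W := by
  intro K hKc hKb hKW
  obtain ⟨L, hL⟩ := hf K hKc hKb hKW
  obtain ⟨M, hM⟩ := hg K hKc hKb hKW
  exact ⟨L + M, hL.add hM⟩

lemma LocallyLipschitzOnSet.mono {f : X → ℝ} {V W : Set X} (hf : LocallyLipschitzOnSet f W)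
    (h : V ⊆ W) : LocallyLipschitzOnSet f V :=
  fun K hKc hKb hKV => hf K hKc hKb (hKV.trans h)

end Slope

section SmallSlope

variable {X : Type u} [MetricSpace X] [MeasurableSpace X] {μ : Measure X} {Cd : ℝ≥0}

lemma DensityOneAt.eventually_measure_diff_le (hd : IsDoublingWith μ Cd) {E : Set X}
    (hE : MeasurableSet E) {x : X} (hx : DensityOneAt μ E x) {ε : ℝ≥0∞} (hε : ε ≠ 0) :
    ∀ᶠ r in 𝓝[>] (0 : ℝ), μ (ball x r \ E) ≤ ε * μ (ball x r) := by
  filter_upwards [hx.eventually_const_lt (ENNReal.sub_lt_self (b := ε) ENNReal.one_ne_top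
    one_ne_zero hε), self_mem_nhdsWithin] with r hr hr0
  have hV := (hd.measure_ball_pos x hr0).ne'
  have hV' := (hd.measure_ball_lt_top x r).ne
  have h1 : (1 - ε) * μ (ball x r) ≤ μ (ball x r ∩ E) := by
    rw [inter_comm]
    exact (ENNReal.le_div_iff_mul_le (.inl hV) (.inl hV')).1 hr.le
  have hfin : (1 - ε) * μ (ball x r) ≠ ∞ :=
    ne_top_of_le_ne_top (measure_ne_top_of_subset inter_subset_left hV') h1
  refine (ENNReal.add_le_add_iff_left hfin).1 ?_
  calc (1 - ε) * μ (ball x r) + μ (ball x r \ E)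
      ≤ μ (ball x r ∩ E) + μ (ball x r \ E) := by gcongr
    _ = 1 * μ (ball x r) := by rw [measure_inter_add_sdiff _ hE, one_mul]
    _ ≤ (1 - ε + ε) * μ (ball x r) := by gcongr; exact le_tsub_add
    _ = _ := add_mul _ _ _

/-- The points of `E` at which `E` fills a proportion at least `1 - ε` of all balls of radius
less than `t`. -/
def uniformDensitySet (μ : Measure X) (E : Set X) (ε : ℝ≥0∞) (t : ℝ) : Set X :=
  {x | x ∈ E ∧ ∀ r, 0 < r → r < t → μ (ball x r \ E) ≤ ε * μ (ball x r)}

lemma iUnion_uniformDensitySet (hd : IsDoublingWith μ Cd) {E : Set X} (hE : MeasurableSet E)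
    (hdens : ∀ x ∈ E, DensityOneAt μ E x) {ε : ℝ≥0∞} (hε : ε ≠ 0) :
    ⋃ n : ℕ, uniformDensitySet μ E ε (1 / (n + 1)) = E := by
  refine subset_antisymm (iUnion_subset fun n x hx => hx.1) fun x hx => ?_
  obtain ⟨t, ht, hxt⟩ := mem_nhdsGT_iff_exists_Ioo_subset.1
    ((hdens x hx).eventually_measure_diff_le hd hE hε)
  obtain ⟨n, hn⟩ := exists_nat_one_div_lt (mem_Ioi.1 ht)
  exact mem_iUnion.2 ⟨n, hx, fun r hr hrn => hxt ⟨hr, hrn.trans hn⟩⟩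

lemma monotone_uniformDensitySet (E : Set X) (ε : ℝ≥0∞) :
    Monotone fun n : ℕ => uniformDensitySet μ E ε (1 / (n + 1)) := fun _ _ hmn _ hx =>
  ⟨hx.1, fun r hr hrn => hx.2 r hr (hrn.trans_le (Nat.one_div_le_one_div hmn))⟩

lemma two_mul_measure_ball_diff_le (hd : IsDoublingWith μ Cd) (E : Set X) (m : ℕ) {t : ℝ}
    {e z : X} (he : e ∈ uniformDensitySet μ E (2 * (Cd : ℝ≥0∞) ^ (m + 5))⁻¹ t) {s : ℝ}
    (hs : 0 < s) (hst : 22 * s < t) (hze : dist z e < 20 * s) :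
    2 * μ (ball z (2 * ((1 / 2) ^ m * s)) \ E) ≤ μ (ball z (2 * ((1 / 2) ^ m * s))) := by
  have hCd : (Cd : ℝ≥0∞) ^ (m + 5) ≠ 0 := pow_ne_zero _ (by simpa using hd.constant_ne_zero z)
  have hCd' : (Cd : ℝ≥0∞) ^ (m + 5) ≠ ∞ := ENNReal.pow_ne_top ENNReal.coe_ne_top
  have hm : (1 / 2 : ℝ) ^ m ≤ 1 := pow_le_one₀ (by norm_num) (by norm_num)
  have hms : (1 / 2 : ℝ) ^ m * s ≤ s := mul_le_of_le_one_left hs.le hm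
  have hpow : (2 : ℝ) ^ (m + 5) * (2 * ((1 / 2) ^ m * s)) = 64 * s := by
    rw [pow_add, one_div, inv_pow]; field_simp; norm_num
  calc 2 * μ (ball z (2 * ((1 / 2) ^ m * s)) \ E) ≤ 2 * μ (ball e (22 * s) \ E) := by
        gcongr
        exact ball_subset_ball' (by linarith)
    _ ≤ 2 * ((2 * (Cd : ℝ≥0∞) ^ (m + 5))⁻¹ *
        ((Cd : ℝ≥0∞) ^ (m + 5) * μ (ball z (2 * ((1 / 2) ^ m * s))))) := by
        gcongr
        refine (he.2 (22 * s) (by positivity) hst).trans (mul_le_mul' le_rfl ?_)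
        refine hd.measure_ball_le (m + 5) (by positivity) ?_
        rw [hpow, dist_comm]
        linarith
    _ = (2 * (Cd : ℝ≥0∞) ^ (m + 5))⁻¹ * (2 * (Cd : ℝ≥0∞) ^ (m + 5)) *
        μ (ball z (2 * ((1 / 2) ^ m * s))) := by ring
    _ = _ := by
        rw [ENNReal.inv_mul_cancel (mul_ne_zero two_ne_zero hCd)
          (ENNReal.mul_ne_top (by simp) hCd'), one_mul]

/-- Near a set `E` of density points on which `w` vanishes, `w` is the `L¹_loc`-limit of locally
Lipschitz functions whose slopes have integrals at most `κ`. -/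
def HasSmallSlopes (μ : Measure X) (w : X → ℝ) (E : Set X) (κ : ℝ≥0∞) : Prop :=
  ∃ (U : Set X) (ws : ℕ → X → ℝ) (F : ℕ → X → ℝ≥0∞), IsOpen U ∧ E ⊆ U ∧
    (∀ i, LocallyLipschitzOnSet (ws i) U) ∧ TendstoL1loc μ ws w U ∧ (∀ i, Measurable (F i)) ∧
    (∀ i, ∀ x ∈ U, ∃ s > 0, ∀ x' ∈ ball x s,
      ENNReal.ofReal |ws i x' - ws i x| ≤ F i x * ENNReal.ofReal (dist x' x)) ∧
    ∀ i, ∫⁻ x in U, F i x ∂μ ≤ κ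

variable [BorelSpace X]

lemma exists_isOpen_measure_diff_closure_le (ν : Measure X) [IsFiniteMeasure ν] {G : ℕ → Set X}
    (hG : Monotone G) {p : X} (hp : p ∉ ⋃ n, G n) {ε : ℝ≥0∞} (hε : ε ≠ 0) :
    ∃ (U : Set X) (n : ℕ), IsOpen U ∧ ⋃ n, G n ⊆ U ∧ p ∉ U ∧ ν (U \ closure (G n)) ≤ ε := by
  obtain ⟨U, hGU, hU, hνU⟩ := (⋃ n, G n).exists_isOpen_lt_add (μ := ν) (measure_ne_top _ _)
    (ε := ε / 2) (by simpa using hε)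
  have hlim := tendsto_measure_iUnion_atTop (μ := ν) hG
  obtain ⟨n, hn⟩ := (((hlim.add_const (ε / 2))).eventually_const_lt
    (ENNReal.lt_add_right (measure_ne_top _ _) (by simpa using hε))).exists
  refine ⟨U ∩ {p}ᶜ, n, hU.inter isOpen_compl_singleton,
    subset_inter hGU fun x hx hxp => hp (hxp ▸ hx), fun h => h.2 rfl, ?_⟩
  refine (measure_mono (sdiff_subset_sdiff_left inter_subset_left)).trans ?_
  refine (ENNReal.add_le_add_iff_left (measure_ne_top ν (U ∩ closure (G n)))).1 ?_
  rw [measure_inter_add_sdiff _ isClosed_closure.measurableSet]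
  calc ν U ≤ ν (G n) + ε / 2 + ε / 2 := hνU.le.trans (add_le_add hn.le le_rfl)
    _ = ν (G n) + ε := by rw [add_assoc, ENNReal.add_halves]
    _ ≤ _ := by
      gcongr
      exact subset_inter ((subset_iUnion G n).trans hGU) subset_closure

lemma HasPoincareBound.hasSmallSlopes [ProperSpace X] [IsLocallyFiniteMeasure μ] {ν : Measure X}
    [IsFiniteMeasure ν] {C : ℝ≥0∞} {w : X → ℝ} (hwν : HasPoincareBound μ ν C w) (hC : C ≠ ∞)
    (hd : IsDoublingWith μ Cd) (hCd : 1 ≤ Cd) (hw : LocallyIntegrable w μ) {E : Set X}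
    (hE : MeasurableSet E) (hdens : ∀ x ∈ E, DensityOneAt μ E x) (hE0 : ∀ x ∈ E, w x = 0)
    {κ : ℝ≥0∞} (hκ : κ ≠ 0) : HasSmallSlopes μ w E κ := by
  rcases eq_or_ne E univ with rfl | hEu
  · refine ⟨univ, fun _ _ => 0, fun _ _ => 0, isOpen_univ, subset_rfl,
      fun i K _ _ _ => ⟨0, (LipschitzWith.const (0 : ℝ)).lipschitzOnWith⟩, fun K _ _ _ => ?_, fun i => measurable_const,
      fun i x _ => ⟨1, one_pos, fun _ _ => by simp⟩, fun i => by simp⟩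
    simp [hE0]
  obtain ⟨p, hp⟩ := (ne_univ_iff_exists_notMem E).1 hEu
  set K : ℝ≥0∞ := 480 * (Cd : ℝ≥0∞) ^ 14 * C
  have hK : K ≠ ∞ := by simp [K, ENNReal.mul_eq_top, hC]
  obtain ⟨κ₁, hκ₁, hκ₁'⟩ := ENNReal.exists_nnreal_pos_mul_lt (a := K) (b := κ / 2) hK
    (by simpa using hκ)
  obtain ⟨κ₂, hκ₂, hκ₂'⟩ := ENNReal.exists_nnreal_pos_mul_lt (a := K * ν univ) (b := κ / 2)
    (ENNReal.mul_ne_top hK (measure_ne_top _ _)) (by simpa using hκ)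
  obtain ⟨m, hm⟩ := exists_pow_lt_of_lt_one (show (0 : ℝ) < κ₂ by exact_mod_cast hκ₂)
    (show (1 / 2 : ℝ) < 1 by norm_num)
  have hε : (2 * (Cd : ℝ≥0∞) ^ (m + 5))⁻¹ ≠ 0 :=
    ENNReal.inv_ne_zero.2 (ENNReal.mul_ne_top (by simp) (ENNReal.pow_ne_top ENNReal.coe_ne_top))
  have hGE := iUnion_uniformDensitySet hd hE hdens hε
  obtain ⟨U, n, hU, hEU, hpU, hνU⟩ := exists_isOpen_measure_diff_closure_le ν
    (monotone_uniformDensitySet (μ := μ) E _) (p := p) (by rwa [hGE]) (ε := κ₁)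
    (by simpa using hκ₁.ne')
  rw [hGE] at hEU
  set t : ℝ := 1 / (n + 1)
  have ht : 0 < t := by positivity
  set ρ : ℕ → X → ℝ := fun i x => min (t * (1 / (i + 1))) (infDist x Uᶜ) / 100
  have hρ : ∀ i, IsScale (ρ i) := fun i => isScale_min_infDist _ _
  have hδt : ∀ i : ℕ, t * (1 / ((i : ℝ) + 1)) ≤ t := fun i =>
    mul_le_of_le_one_right ht.le (by rw [div_le_one (by positivity)]; simp)
  have hρδ : ∀ i x, ρ i x ≤ t * (1 / (i + 1)) / 100 := fun i x => by
    simp only [ρ]; gcongr; exact min_le_left _ _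
  have hρU : ∀ i x, ρ i x ≤ infDist x Uᶜ / 100 := fun i x => by
    simp only [ρ]; gcongr; exact min_le_right _ _
  have hpos : ∀ i, ∀ x ∈ U, 0 < ρ i x := by
    intro i x hx
    have : 0 < infDist x Uᶜ :=
      (hU.isClosed_compl.notMem_iff_infDist_pos ⟨p, hpU⟩).1 (by simpa using hx)
    simp only [ρ]
    positivity
  have hsub : ∀ i, ∀ x ∈ U, ball x (8 * ρ i x) ⊆ U := by
    intro i x hx y hy
    by_contra hyU
    have h1 := infDist_le_dist_of_mem (x := x) (s := Uᶜ) hyU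
    rw [mem_ball, dist_comm] at hy
    linarith [hρU i x, hpos i x hx]
  have hF := fun i => hwν.exists_slope_moll hd hCd (hρ i) hw hU (hpos i) (hsub i) hE hE0
    (uniformDensitySet μ E (2 * (Cd : ℝ≥0∞) ^ (m + 5))⁻¹ t) (η := (1 / 2) ^ m) (by positivity)
    (pow_le_one₀ (by norm_num) (by norm_num)) fun e he z hz hze =>
      two_mul_measure_ball_diff_le hd E m he (hpos i z hz)
        (by linarith [hρδ i z, hδt i]) hze
  choose F hFm hFs hFi using hF
  refine ⟨U, fun i => moll μ (ρ i) w, F, hU, hEU,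
    fun i => locallyLipschitzOnSet_moll hd hCd (hρ i) hw (hpos i),
    tendstoL1loc_moll hd hρ hw hpos (δ := fun i => t * (1 / (i + 1)))
      (by simpa using tendsto_one_div_add_atTop_nhds_zero_nat.const_mul t) fun i x => ?_, hFm,
    fun i x hx => ⟨ρ i x / 4, by linarith [hpos i x hx], hFs i x hx⟩, fun i => ?_⟩
  · have : 0 < t * (1 / ((i : ℝ) + 1)) := by positivity
    linarith [hρδ i x]
  · calc _ ≤ K * (ν (U \ closure (uniformDensitySet μ E (2 * (Cd : ℝ≥0∞) ^ (m + 5))⁻¹ t)) +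
          ENNReal.ofReal ((1 / 2) ^ m) * ν univ) := hFi i
      _ ≤ K * (κ₁ + κ₂ * ν univ) := by
          gcongr
          rw [← ENNReal.ofReal_coe_nnreal]
          exact ENNReal.ofReal_le_ofReal hm.le
      _ = κ₁ * K + κ₂ * (K * ν univ) := by ring
      _ ≤ κ / 2 + κ / 2 := add_le_add hκ₁'.le hκ₂'.le
      _ = κ := ENNReal.add_halves κ

end SmallSlope

section TotalVariation

variable {X : Type u} [MetricSpace X] [MeasurableSpace X] {μ : Measure X}

lemma HasSmallSlopes.totVarSet_le {w : X → ℝ} {E : Set X} {κ : ℝ≥0∞} [OpensMeasurableSpace X]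
    (h : HasSmallSlopes μ w E κ) : totVarSet μ w E ≤ κ := by
  obtain ⟨U, ws, F, hU, hEU, hlip, hconv, -, hs, hF⟩ := h
  refine iInf_le_of_le U (iInf₂_le_of_le hU hEU (iInf_le_of_le ws (iInf₂_le_of_le hlip hconv ?_)))
  refine (liminf_le_liminf (Eventually.of_forall fun i => ?_)).trans_eq
    (liminf_const (f := atTop) κ)
  refine (setLIntegral_mono' hU.measurableSet fun x hx => ?_).trans (hF i)
  obtain ⟨s, hs0, hsx⟩ := hs i x hx
  have := lipConst_add_le (f := fun _ => 0) hs0 hsx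
  simpa [lipConst] using this

lemma TendstoL1loc.mono {f : ℕ → X → ℝ} {g : X → ℝ} {V W : Set X} (hf : TendstoL1loc μ f g W)
    (h : V ⊆ W) : TendstoL1loc μ f g V :=
  fun K hKc hKb hKV => hf K hKc hKb (hKV.trans h)

lemma TendstoL1loc.add [OpensMeasurableSpace X] {f f' : ℕ → X → ℝ} {g g' : X → ℝ} {W : Set X}
    (hf : TendstoL1loc μ f g W) (hf' : TendstoL1loc μ f' g' W)
    (hlip : ∀ i, LocallyLipschitzOnSet (f i) W) (hg : AEStronglyMeasurable g μ) :
    TendstoL1loc μ (fun i x => f i x + f' i x) (fun x => g x + g' x) W := by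
  intro K hKc hKb hKW
  have h := (hf K hKc hKb hKW).add (hf' K hKc hKb hKW)
  rw [add_zero] at h
  refine tendsto_of_tendsto_of_tendsto_of_le_of_le tendsto_const_nhds h (fun _ => zero_le)
    fun i => ?_
  obtain ⟨L, hL⟩ := hlip i K hKc hKb hKW
  have hm : AEMeasurable (fun x => ENNReal.ofReal |f i x - g x|) (μ.restrict K) :=
    ((hL.continuousOn.aemeasurable hKc.measurableSet).sub
      hg.aemeasurable.restrict).abs.ennreal_ofReal
  rw [← lintegral_add_left' hm]
  refine lintegral_mono fun x => ?_
  rw [← ENNReal.ofReal_add (abs_nonneg _) (abs_nonneg _), add_sub_add_comm]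
  exact ENNReal.ofReal_le_ofReal (abs_add_le _ _)

lemma HasSmallSlopes.totVarSet_add_le [OpensMeasurableSpace X] {v w : X → ℝ} {E A : Set X}
    {κ : ℝ≥0∞} (h : HasSmallSlopes μ w E κ) (hA : A ⊆ E) (hv : AEStronglyMeasurable v μ) :
    totVarSet μ (fun x => v x + w x) A ≤ totVarSet μ v A + κ := by
  obtain ⟨U, ws, F, hU, hEU, hlip, hconv, hFm, hs, hF⟩ := h
  simp only [totVarSet, totVarOn, ENNReal.iInf_add]
  refine le_iInf fun W => le_iInf₂ fun hW hAW => le_iInf fun vs => le_iInf₂ fun hvlip hvconv => ?_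
  refine iInf_le_of_le (W ∩ U) (iInf₂_le_of_le (hW.inter hU) (subset_inter hAW (hA.trans hEU))
    (iInf_le_of_le (fun i x => vs i x + ws i x) (iInf₂_le_of_le
      (fun i => ((hvlip i).mono inter_subset_left).add ((hlip i).mono inter_subset_right))
      ((hvconv.mono inter_subset_left).add (hconv.mono inter_subset_right)
        (fun i => (hvlip i).mono inter_subset_left) hv) ?_)))
  rw [← ennreal_liminf_add_const]
  refine liminf_le_liminf (Eventually.of_forall fun i => ?_)
  calc ∫⁻ x in W ∩ U, lipConst (fun y => vs i y + ws i y) x ∂μ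
      ≤ ∫⁻ x in W ∩ U, (lipConst (vs i) x + F i x) ∂μ := by
        refine setLIntegral_mono' (hW.inter hU).measurableSet fun x hx => ?_
        obtain ⟨s, hs0, hsx⟩ := hs i x hx.2
        exact lipConst_add_le hs0 hsx
    _ = (∫⁻ x in W ∩ U, lipConst (vs i) x ∂μ) + ∫⁻ x in W ∩ U, F i x ∂μ :=
        lintegral_add_right _ (hFm i)
    _ ≤ (∫⁻ x in W, lipConst (vs i) x ∂μ) + κ :=
        add_le_add (lintegral_mono_set inter_subset_left)
          ((lintegral_mono_set inter_subset_right).trans (hF i))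

end TotalVariation

lemma GoodSpace.hasSmallSlopes_sub {X : Type u} [MetricSpace X] [MeasurableSpace X] [BorelSpace X]
    {μ : Measure X} {Cd : ℝ≥0} {CP : ℝ} (hX : GoodSpace X μ Cd CP) (hCd : 1 ≤ Cd) (hCP : 0 ≤ CP)
    {u v : X → ℝ} (hu : IsBV μ u) (hv : IsBV μ v) {E : Set X} (hE : MeasurableSet E)
    (hdens : ∀ x ∈ E, DensityOneAt μ E x) (heq : ∀ x ∈ E, u x = v x) {κ : ℝ≥0∞} (hκ : κ ≠ 0) :
    HasSmallSlopes μ (fun x => u x - v x) E κ := by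
  obtain ⟨-, _, -, hd, hP⟩ := hX
  have := hd.properSpace
  have := hd.isLocallyFiniteMeasure
  obtain ⟨ν₁, _, h₁⟩ := hu.exists_hasPoincareBound hd hP hCP
  obtain ⟨ν₂, _, h₂⟩ := hv.exists_hasPoincareBound hd hP hCP
  exact (h₁.sub h₂ hu.1.aestronglyMeasurable).hasSmallSlopes (by simp [ENNReal.mul_eq_top]) hd hCd
    (hu.1.sub hv.1) hE hdens (fun x hx => sub_eq_zero.2 (heq x hx)) hκ

theorem statement4 {X : Type u} [MetricSpace X] [MeasurableSpace X] [BorelSpace X]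
    (μ : Measure X) (Cd : ℝ≥0) (CP : ℝ) (hCd : 1 ≤ Cd) (hCP : 0 < CP)
    (hX : GoodSpace X μ Cd CP)
    (u v : X → ℝ) (hu : IsBV μ u) (hv : IsBV μ v)
    (E : Set X) (hE : MeasurableSet E)
    (hdens : ∀ x ∈ E, DensityOneAt μ E x)
    (heq : ∀ x ∈ E, u x = v x) :
    totVarSet μ (fun y => u y - v y) E = 0 ∧
      ∀ A : Set X, A ⊆ E → totVarSet μ u A = totVarSet μ v A := by
  have := hX.2.1
  have := hX.2.2.2.1.properSpace
  have huv : ∀ κ ≠ 0, HasSmallSlopes μ (fun x => u x - v x) E κ := fun κ hκ =>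
    hX.hasSmallSlopes_sub hCd hCP.le hu hv hE hdens heq hκ
  have hvu : ∀ κ ≠ 0, HasSmallSlopes μ (fun x => v x - u x) E κ := fun κ hκ =>
    hX.hasSmallSlopes_sub hCd hCP.le hv hu hE hdens (fun x hx => (heq x hx).symm) hκ
  refine ⟨by_contra fun h => ?_, fun A hA => le_antisymm ?_ ?_⟩
  · obtain ⟨κ, hκ, hlt⟩ := exists_between (pos_iff_ne_zero.2 h)
    exact (huv κ hκ.ne').totVarSet_le.not_gt hlt
  · refine ENNReal.le_of_forall_pos_le_add fun κ hκ _ => ?_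
    simpa using (huv κ (by simpa using hκ.ne')).totVarSet_add_le hA hv.1.aestronglyMeasurable
  · refine ENNReal.le_of_forall_pos_le_add fun κ hκ _ => ?_
    simpa using (hvu κ (by simpa using hκ.ne')).totVarSet_add_le hA hu.1.aestronglyMeasurable

end
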